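/- arXiv:2103.08844 — 2 statements merged into one kernel-verified Lean document; each statement's English description precedes it below -/
import Mathlib

section
/- For every integer k ≥ 2 and every real p with 0 < p ≤ q_k, the integral ∫_{ℝ^N} |E_k1(x)|^p dx is infinite. -/
open MeasureTheory Real Set
open scoped ENNReal

noncomputable section

/-- Index set for multi-indices `β = (β₁, β₂) ∈ ℕ²` with `1 ≤ β₁ + β₂ ≤ k`;
its cardinality is `N = (k+1)(k+2)/2 − 1`. -/
def Idx (k : ℕ) : Type :=
  {β : Fin (k + 1) × Fin (k + 1) // 1 ≤ (β.1 : ℕ) + (β.2 : ℕ) ∧ (β.1 : ℕ) + (β.2 : ℕ) ≤ k}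

instance (k : ℕ) : Fintype (Idx k) := by unfold Idx; infer_instance

/-- The phase polynomial `P(ξ; x) = ∑_{1 ≤ |β| ≤ k} x_β ξ₁^{β₁} ξ₂^{β₂}`. -/
def Pphase (k : ℕ) (x : Idx k → ℝ) (ξ : Fin 2 → ℝ) : ℝ :=
  ∑ β : Idx k, x β * ξ 0 ^ (β.1.1 : ℕ) * ξ 1 ^ (β.1.2 : ℕ)

/-- `E_k1(x) = ∫_{[0,1]²} e(P(ξ; x)) dξ` with `e(t) = exp(2πit)`. -/
def Eone (k : ℕ) (x : Idx k → ℝ) : ℂ :=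
  ∫ ξ in Icc (0 : Fin 2 → ℝ) 1, Complex.exp (2 * Real.pi * Complex.I * (Pphase k x ξ))

/-- Lower bound for the model oscillatory integral `∫₀^S cos (2π s^(n+1)) ds`. -/
theorem exists_le_integral_cos_pow (n : ℕ) (hn : 1 ≤ n) :
    ∃ δ > 0, ∀ S : ℝ, 1 ≤ S → δ - 1 / S ≤ ∫ s in (0 : ℝ)..S, cos (2 * π * s ^ (n + 1)) := by
  set c : ℝ := 2 * π * (n + 1) with hc
  have hpi := Real.pi_gt_three
  have hn' : (1 : ℝ) ≤ n := by exact_mod_cast hn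
  have hc0 : 0 < c := by positivity
  have hc1 : 1 ≤ c := by rw [hc]; nlinarith
  let H : ℝ → ℝ := fun S => (∫ s in (0 : ℝ)..S, cos (2 * π * s ^ (n + 1)))
    - sin (2 * π * S ^ (n + 1)) / (c * S ^ n)
    - n / c ^ 2 * ((1 - cos (2 * π * S ^ (n + 1))) / S ^ (2 * n + 1))
  have hcont : Continuous fun s : ℝ => cos (2 * π * s ^ (n + 1)) := by fun_prop
  have hder : ∀ S : ℝ, 0 < S → HasDerivAt H
      (n * (2 * n + 1) / c ^ 2 * ((1 - cos (2 * π * S ^ (n + 1))) / S ^ (2 * n + 2))) S := by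
    intro S hS
    have h0 : HasDerivAt (fun S : ℝ => ∫ s in (0 : ℝ)..S, cos (2 * π * s ^ (n + 1)))
        (cos (2 * π * S ^ (n + 1))) S :=
      intervalIntegral.integral_hasDerivAt_right (hcont.intervalIntegrable _ _)
        (hcont.stronglyMeasurableAtFilter _ _) hcont.continuousAt
    have h1 : HasDerivAt (fun S : ℝ => 2 * π * S ^ (n + 1)) (c * S ^ n) S := by
      have := (hasDerivAt_pow (n + 1) S).const_mul (2 * π)
      refine this.congr_deriv ?_
      rw [hc, Nat.add_sub_cancel]; push_cast; ring
    have h2 : HasDerivAt (fun S : ℝ => c * S ^ n) (c * (n * S ^ (n - 1))) S :=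
      (hasDerivAt_pow n S).const_mul c
    have h3 : HasDerivAt (fun S : ℝ => S ^ (2 * n + 1)) ((2 * n + 1) * S ^ (2 * n)) S := by
      have := hasDerivAt_pow (2 * n + 1) S
      refine this.congr_deriv ?_
      rw [Nat.add_sub_cancel]; push_cast; ring
    have h4 := h1.sin.div h2 (by positivity)
    have h5 := ((h1.cos.const_sub 1).div h3 (by positivity)).const_mul ((n : ℝ) / c ^ 2)
    have h6 := (h0.sub h4).sub h5
    refine h6.congr_deriv ?_
    obtain ⟨m, rfl⟩ : ∃ m, n = m + 1 := ⟨n - 1, by omega⟩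
    simp only [Nat.add_sub_cancel]
    have hS' : S ≠ 0 := hS.ne'
    have hc' : c ≠ 0 := hc0.ne'
    generalize sin (2 * π * S ^ (m + 1 + 1)) = A
    generalize cos (2 * π * S ^ (m + 1 + 1)) = B
    field_simp
    ring
  have hmono : MonotoneOn H (Ioi 0) := by
    refine monotoneOn_of_deriv_nonneg (convex_Ioi 0)
      (fun S hS => (hder S hS).continuousAt.continuousWithinAt) ?_ ?_
    · intro S hS
      rw [interior_Ioi] at hS
      exact (hder S hS).differentiableAt.differentiableWithinAt
    · intro S hS
      rw [interior_Ioi] at hS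
      have hS : 0 < S := hS
      rw [(hder S hS).deriv]
      have := Real.cos_le_one (2 * π * S ^ (n + 1))
      have : 0 ≤ 1 - cos (2 * π * S ^ (n + 1)) := by linarith
      positivity
  have hstrict : H (1 / 4) < H (1 / 2) := by
    have : StrictMonoOn H (Icc (1 / 4) (1 / 2)) := by
      refine strictMonoOn_of_deriv_pos (convex_Icc _ _)
        (fun S hS => (hder S (by linarith [hS.1])).continuousAt.continuousWithinAt) ?_
      intro S hS
      rw [interior_Icc] at hS
      have hS0 : 0 < S := by linarith [hS.1]
      rw [(hder S hS0).deriv]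
      have hp : S ^ (n + 1) ≤ S := by
        calc S ^ (n + 1) ≤ S ^ 1 := pow_le_pow_of_le_one hS0.le (by linarith [hS.2]) (by omega)
          _ = S := pow_one S
      have hp0 : 0 < S ^ (n + 1) := by positivity
      have hlt : cos (2 * π * S ^ (n + 1)) < 1 := by
        rw [← Real.cos_zero]
        exact Real.cos_lt_cos_of_nonneg_of_le_pi le_rfl (by nlinarith [hS.2]) (by positivity)
      have : 0 < 1 - cos (2 * π * S ^ (n + 1)) := by linarith
      positivity
    exact this (by norm_num) (by norm_num) (by norm_num)
  have hsmall : ∀ S : ℝ, 0 < S → S ≤ 1 → -(100 * S) ≤ H S := by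
    intro S hS hS1
    have hp0 : 0 < S ^ n := by positivity
    have e1 : |∫ s in (0 : ℝ)..S, cos (2 * π * s ^ (n + 1))| ≤ 1 * |S - 0| := by
      rw [← Real.norm_eq_abs]
      exact intervalIntegral.norm_integral_le_of_norm_le_const fun s _ => by
        rw [Real.norm_eq_abs]; exact Real.abs_cos_le_one _
    rw [sub_zero, abs_of_pos hS] at e1
    have e2 : sin (2 * π * S ^ (n + 1)) / (c * S ^ n) ≤ S := by
      rw [div_le_iff₀ (by positivity)]
      have := Real.sin_le (x := 2 * π * S ^ (n + 1)) (by positivity)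
      refine this.trans ?_
      rw [hc, pow_succ]
      have : 0 < π * S ^ n * S := by positivity
      nlinarith
    have e3 : (1 - cos (2 * π * S ^ (n + 1))) / S ^ (2 * n + 1) ≤ 40 * S := by
      rw [div_le_iff₀ (by positivity)]
      have := Real.one_sub_sq_div_two_le_cos (x := 2 * π * S ^ (n + 1))
      have e : S ^ (2 * n + 1) * S = (S ^ (n + 1)) ^ 2 := by ring
      have : 0 < (S ^ (n + 1)) ^ 2 := by positivity
      have hpp : π ^ 2 ≤ 20 := by nlinarith [Real.pi_lt_d2]
      nlinarith
    have e4 : (n : ℝ) / c ^ 2 ≤ 1 := by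
      rw [div_le_one (by positivity)]
      have : (n : ℝ) ≤ c := by rw [hc]; nlinarith
      nlinarith
    have e4' : 0 ≤ (n : ℝ) / c ^ 2 := by positivity
    have e5 : (n : ℝ) / c ^ 2 * ((1 - cos (2 * π * S ^ (n + 1))) / S ^ (2 * n + 1)) ≤ 40 * S :=
      (mul_le_mul e4 e3 (div_nonneg (by linarith [Real.cos_le_one (2 * π * S ^ (n + 1))])
        (by positivity)) zero_le_one).trans (by linarith)
    have := (abs_le.1 e1).1
    simp only [H]
    linarith
  have hnonneg : 0 ≤ H (1 / 4) := by
    refine le_of_forall_pos_le_add fun ε hε => ?_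
    have hη : 0 < min (1 / 4) (ε / 100) := by positivity
    have h1 := hsmall _ hη ((min_le_left _ _).trans (by norm_num))
    have h2 := hmono (show min (1 / 4) (ε / 100) ∈ Ioi 0 from hη)
      (show (1 / 4 : ℝ) ∈ Ioi 0 by norm_num) (min_le_left _ _)
    linarith [min_le_right (1 / 4 : ℝ) (ε / 100)]
  refine ⟨H (1 / 2), by linarith, fun S hS => ?_⟩
  have hS0 : 0 < S := by linarith
  have h1 := hmono (show (1 / 2 : ℝ) ∈ Ioi 0 by norm_num) (show S ∈ Ioi 0 from hS0) (by linarith)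
  have h2 : -(1 / S) ≤ sin (2 * π * S ^ (n + 1)) / (c * S ^ n) := by
    have : S ≤ c * S ^ n := by
      calc S = 1 * S ^ 1 := by ring
        _ ≤ c * S ^ n := mul_le_mul hc1 (pow_le_pow_right₀ hS hn) (by positivity) hc0.le
    calc -(1 / S) ≤ -(1 / (c * S ^ n)) := neg_le_neg (one_div_le_one_div_of_le hS0 this)
      _ = (-1) / (c * S ^ n) := by ring
      _ ≤ _ := by gcongr; exact Real.neg_one_le_sin _
  have h3 : 0 ≤ (n : ℝ) / c ^ 2 * ((1 - cos (2 * π * S ^ (n + 1))) / S ^ (2 * n + 1)) := by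
    have : 0 ≤ 1 - cos (2 * π * S ^ (n + 1)) := by linarith [Real.cos_le_one (2 * π * S ^ (n + 1))]
    positivity
  have h4 : H S = (∫ s in (0 : ℝ)..S, cos (2 * π * s ^ (n + 1)))
    - sin (2 * π * S ^ (n + 1)) / (c * S ^ n)
    - n / c ^ 2 * ((1 - cos (2 * π * S ^ (n + 1))) / S ^ (2 * n + 1)) := rfl
  linarith

/-- One-sided first derivative test for oscillatory integrals with convex phase. -/
theorem le_integral_cos_of_convex_phase {f f' f'' : ℝ → ℝ} {M S : ℝ} (hMS : M ≤ S)
    (hf : ∀ s, HasDerivAt f (f' s) s) (hf' : ∀ s, HasDerivAt f' (f'' s) s)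
    (hpos : ∀ s, M ≤ s → 0 < f' s) (hconv : ∀ s, M ≤ s → 0 ≤ f'' s) :
    -(1 / f' M) ≤ ∫ s in M..S, cos (2 * π * f s) := by
  let Q : ℝ → ℝ := fun S => (∫ s in M..S, cos (2 * π * f s))
    - (sin (2 * π * f S) + 1) / (2 * π * f' S)
  have hpi := Real.pi_gt_three
  have hfc : Continuous f := continuous_iff_continuousAt.2 fun s => (hf s).continuousAt
  have hcont : Continuous fun s : ℝ => cos (2 * π * f s) := by fun_prop
  have hder : ∀ S, M ≤ S → HasDerivAt Q
      ((sin (2 * π * f S) + 1) * f'' S / (2 * π * f' S ^ 2)) S := by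
    intro S hS
    have h0 : HasDerivAt (fun S : ℝ => ∫ s in M..S, cos (2 * π * f s))
        (cos (2 * π * f S)) S :=
      intervalIntegral.integral_hasDerivAt_right (hcont.intervalIntegrable _ _)
        (hcont.stronglyMeasurableAtFilter _ _) hcont.continuousAt
    have hp := hpos S hS
    have h1 := ((hf S).const_mul (2 * π)).sin.add_const 1
    have h2 := (hf' S).const_mul (2 * π)
    refine (h0.sub (h1.div h2 (by positivity))).congr_deriv ?_
    generalize sin (2 * π * f S) = A
    generalize cos (2 * π * f S) = B
    field_simp
    ring
  have hmono : MonotoneOn Q (Ici M) := by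
    refine monotoneOn_of_deriv_nonneg (convex_Ici M)
      (fun S hS => (hder S hS).continuousAt.continuousWithinAt) ?_ ?_
    · intro S hS
      exact (hder S (interior_subset hS)).differentiableAt.differentiableWithinAt
    · intro S hS
      have hS := interior_subset hS
      rw [(hder S hS).deriv]
      have := Real.neg_one_le_sin (2 * π * f S)
      have : 0 ≤ sin (2 * π * f S) + 1 := by linarith
      have := hconv S hS
      positivity
  have h := hmono (self_mem_Ici) (show S ∈ Ici M from hMS) hMS
  simp only [Q, intervalIntegral.integral_same] at h
  have h1 : 0 ≤ (sin (2 * π * f S) + 1) / (2 * π * f' S) := by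
    have := Real.neg_one_le_sin (2 * π * f S)
    have : 0 ≤ sin (2 * π * f S) + 1 := by linarith
    have := hpos S hMS
    positivity
  have h2 : (sin (2 * π * f M) + 1) / (2 * π * f' M) ≤ 1 / f' M := by
    have hp := hpos M le_rfl
    rw [div_le_div_iff₀ (by positivity) hp]
    nlinarith [Real.sin_le_one (2 * π * f M)]
  linarith

/-- Lower bound for the oscillatory integral whose phase is a small perturbation of `s ^ (n + 1)`
by lower order terms of degree less than `n`. -/
theorem exists_le_integral_cos_perturbed (n : ℕ) (hn : 1 ≤ n) :
    ∃ δ > 0, ∃ ε > 0, ∃ M : ℝ, 1 ≤ M ∧ ∀ S : ℝ, M ≤ S → ∀ b : ℕ → ℝ,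
      (∀ j < n, |b j| ≤ ε) →
      δ ≤ ∫ s in (0 : ℝ)..S, cos (2 * π * (s ^ (n + 1) + ∑ j ∈ Finset.range n, b j * s ^ j)) := by
  obtain ⟨δ, hδ, hmodel⟩ := exists_le_integral_cos_pow n hn
  have hn' : (1 : ℝ) ≤ n := by exact_mod_cast hn
  set M : ℝ := 4 / δ + 1 with hM
  have hM1 : 1 ≤ M := by rw [hM]; linarith [show 0 < 4 / δ by positivity]
  have hM0 : 0 < M := by linarith
  have hMδ : 1 / M ≤ δ / 4 := by
    rw [div_le_iff₀ hM0, hM]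
    have : δ / 4 * (4 / δ + 1) = 1 + δ / 4 := by field_simp
    linarith
  set ε : ℝ := min (1 / (n : ℝ) ^ 3) (δ / (32 * n * M ^ (n + 1))) with hε
  have hε0 : 0 < ε := by positivity
  have hε3 : (n : ℝ) ^ 3 * ε ≤ 1 := by
    have := min_le_left (1 / (n : ℝ) ^ 3) (δ / (32 * n * M ^ (n + 1)))
    rw [← hε, le_div_iff₀ (by positivity)] at this
    linarith
  have hεM : 8 * n * ε * M ^ (n + 1) ≤ δ / 4 := by
    have := min_le_right (1 / (n : ℝ) ^ 3) (δ / (32 * n * M ^ (n + 1)))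
    rw [← hε, le_div_iff₀ (by positivity)] at this
    linarith
  refine ⟨δ / 4, by positivity, ε, hε0, M, hM1, fun S hS b hb => ?_⟩
  set f : ℝ → ℝ := fun s => s ^ (n + 1) + ∑ j ∈ Finset.range n, b j * s ^ j with hf
  let f' : ℝ → ℝ := fun s => (n + 1) * s ^ n + ∑ j ∈ Finset.range n, b j * (j * s ^ (j - 1))
  let f'' : ℝ → ℝ := fun s => (n + 1) * (n * s ^ (n - 1)) +
    ∑ j ∈ Finset.range n, b j * (j * ((j - 1 : ℕ) * s ^ (j - 1 - 1)))
  have hder : ∀ s, HasDerivAt f (f' s) s := fun s => by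
    refine HasDerivAt.add ?_ (HasDerivAt.fun_sum fun j _ => (hasDerivAt_pow j s).const_mul _)
    simpa using hasDerivAt_pow (n + 1) s
  have hder' : ∀ s, HasDerivAt f' (f'' s) s := fun s =>
    ((hasDerivAt_pow n s).const_mul _).add (HasDerivAt.fun_sum fun j _ =>
      ((hasDerivAt_pow (j - 1) s).const_mul _).const_mul _)
  have hf'pos : ∀ s, M ≤ s → s ≤ f' s := fun s hs => by
    have hs1 : 1 ≤ s := hM1.trans hs
    have hsum : |∑ j ∈ Finset.range n, b j * (j * s ^ (j - 1))| ≤ s ^ n := by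
      calc _ ≤ ∑ j ∈ Finset.range n, |b j * (j * s ^ (j - 1))| := Finset.abs_sum_le_sum_abs _ _
        _ ≤ ∑ j ∈ Finset.range n, ε * (n * s ^ n) := by
          refine Finset.sum_le_sum fun j hj => ?_
          have hj := Finset.mem_range.1 hj
          rw [abs_mul, abs_of_nonneg (show 0 ≤ (j : ℝ) * s ^ (j - 1) by positivity)]
          gcongr
          · exact hb j hj
          · omega
        _ = (n : ℝ) ^ 2 * ε * s ^ n := by simp; ring
        _ ≤ 1 * s ^ n := by
          gcongr
          refine le_trans ?_ hε3
          exact mul_le_mul_of_nonneg_right (pow_le_pow_right₀ hn' (by norm_num)) hε0.le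
        _ = s ^ n := one_mul _
    have hsn : s ≤ s ^ n := by
      calc s = s ^ 1 := (pow_one s).symm
        _ ≤ s ^ n := pow_le_pow_right₀ hs1 hn
    have := (abs_le.1 hsum).1
    simp only [f']
    have : 1 * s ^ n ≤ n * s ^ n := by gcongr
    linarith
  have hf''nonneg : ∀ s, M ≤ s → 0 ≤ f'' s := fun s hs => by
    have hs1 : 1 ≤ s := hM1.trans hs
    have hsum : |∑ j ∈ Finset.range n, b j * (j * ((j - 1 : ℕ) * s ^ (j - 1 - 1)))|
        ≤ s ^ (n - 1) := by
      calc _ ≤ ∑ j ∈ Finset.range n, |b j * (j * ((j - 1 : ℕ) * s ^ (j - 1 - 1)))| :=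
            Finset.abs_sum_le_sum_abs _ _
        _ ≤ ∑ j ∈ Finset.range n, ε * (n * (n * s ^ (n - 1))) := by
          refine Finset.sum_le_sum fun j hj => ?_
          have hj := Finset.mem_range.1 hj
          rw [abs_mul, abs_of_nonneg
            (show 0 ≤ (j : ℝ) * ((j - 1 : ℕ) * s ^ (j - 1 - 1)) by positivity)]
          gcongr
          · exact hb j hj
          · omega
          · omega
        _ = (n : ℝ) ^ 3 * ε * s ^ (n - 1) := by simp; ring
        _ ≤ 1 * s ^ (n - 1) := by gcongr
        _ = s ^ (n - 1) := one_mul _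
    have := (abs_le.1 hsum).1
    simp only [f'']
    have h1 : 1 * (1 * s ^ (n - 1)) ≤ (n + 1 : ℝ) * (n * s ^ (n - 1)) := by gcongr; linarith
    linarith
  have hfc : Continuous f := by fun_prop
  have hcont : Continuous fun s : ℝ => cos (2 * π * f s) := by fun_prop
  have hcont0 : Continuous fun s : ℝ => cos (2 * π * s ^ (n + 1)) := by fun_prop
  have htail := le_integral_cos_of_convex_phase hS hder hder'
    (fun s hs => lt_of_lt_of_le (by linarith) (hf'pos s hs)) hf''nonneg
  have htail' : 1 / f' M ≤ δ / 4 :=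
    (one_div_le_one_div_of_le hM0 (hf'pos M le_rfl)).trans hMδ
  have hcentral : |(∫ s in (0 : ℝ)..M, cos (2 * π * f s)) -
      ∫ s in (0 : ℝ)..M, cos (2 * π * s ^ (n + 1))| ≤ δ / 4 := by
    rw [← intervalIntegral.integral_sub (hcont.intervalIntegrable _ _)
      (hcont0.intervalIntegrable _ _), ← Real.norm_eq_abs]
    refine (intervalIntegral.norm_integral_le_of_norm_le_const
      (C := 8 * n * ε * M ^ n) fun s hs => ?_).trans ?_
    · rw [uIoc_of_le hM0.le] at hs
      have hlip : |cos (2 * π * f s) - cos (2 * π * s ^ (n + 1))|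
          ≤ |2 * π * f s - 2 * π * s ^ (n + 1)| := Real.abs_cos_sub_cos_le _ _
      rw [Real.norm_eq_abs]
      refine hlip.trans ?_
      have : 2 * π * f s - 2 * π * s ^ (n + 1) =
          2 * π * ∑ j ∈ Finset.range n, b j * s ^ j := by simp only [hf]; ring
      rw [this, abs_mul, abs_of_pos (by positivity : 0 < 2 * π)]
      have hsum : |∑ j ∈ Finset.range n, b j * s ^ j| ≤ n * (ε * M ^ n) := by
        calc _ ≤ ∑ j ∈ Finset.range n, |b j * s ^ j| := Finset.abs_sum_le_sum_abs _ _
          _ ≤ ∑ j ∈ Finset.range n, ε * M ^ n := by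
            refine Finset.sum_le_sum fun j hj => ?_
            have hj := Finset.mem_range.1 hj
            rw [abs_mul, abs_of_nonneg (pow_nonneg hs.1.le j)]
            refine mul_le_mul (hb j hj) ?_ (pow_nonneg hs.1.le j) hε0.le
            exact (pow_le_pow_left₀ hs.1.le hs.2 j).trans (pow_le_pow_right₀ hM1 hj.le)
          _ = _ := by simp
      have : 2 * π ≤ 8 := by linarith [Real.pi_lt_four]
      calc 2 * π * |∑ j ∈ Finset.range n, b j * s ^ j| ≤ 8 * (n * (ε * M ^ n)) := by gcongr
        _ = _ := by ring
    · rw [sub_zero, abs_of_pos hM0]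
      calc _ = 8 * n * ε * M ^ (n + 1) := by ring
        _ ≤ _ := hεM
  have hsplit := intervalIntegral.integral_add_adjacent_intervals
    (hcont.intervalIntegrable (μ := volume) 0 M) (hcont.intervalIntegrable M S)
  have h1 := hmodel M hM1
  have h2 := (abs_le.1 hcentral).1
  rw [← hsplit]
  linarith

/-- Lower bound for the integral over `[0, 1]` of a polynomial phase in `y - w`, when the phase
is close to `(μ (y - w)) ^ (n + 1)` and `w` is away from the endpoints. -/
theorem exists_le_integral_cos_translated (n : ℕ) (hn : 1 ≤ n) :
    ∃ δ > 0, ∃ ε > 0, ∃ M : ℝ, 1 ≤ M ∧ ∀ (μ w : ℝ) (b : ℕ → ℝ), M ≤ μ →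
      1 / 4 ≤ w → w ≤ 3 / 4 → (∀ j < n, |b j| ≤ ε) →
      δ / μ ≤ ∫ y in (0 : ℝ)..1,
        cos (2 * π * ((μ * (y - w)) ^ (n + 1) +
          ∑ j ∈ Finset.range n, b j * (μ * (y - w)) ^ j)) := by
  obtain ⟨δ, hδ, ε, hε, M, hM1, hmain⟩ := exists_le_integral_cos_perturbed n hn
  refine ⟨2 * δ, by positivity, ε, hε, 4 * M, by linarith, fun μ w b hμ hw hw' hb => ?_⟩
  have hμ0 : 0 < μ := by linarith
  let h : ℝ → ℝ := fun s => cos (2 * π * (s ^ (n + 1) + ∑ j ∈ Finset.range n, b j * s ^ j))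
  have hc : Continuous h := by fun_prop
  have e1 : ∫ y in (0 : ℝ)..1, h (μ * (y - w)) = μ⁻¹ * ∫ s in μ * (0 - w)..μ * (1 - w), h s := by
    rw [intervalIntegral.integral_comp_sub_right (fun y => h (μ * y)) w,
      intervalIntegral.integral_comp_mul_left h hμ0.ne', smul_eq_mul]
  have e2 : ∫ s in μ * (0 - w)..μ * (1 - w), h s =
      (∫ s in (0 : ℝ)..μ * w, h (-s)) + ∫ s in (0 : ℝ)..μ * (1 - w), h s := by
    rw [intervalIntegral.integral_comp_neg,
      ← intervalIntegral.integral_add_adjacent_intervals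
        (hc.intervalIntegrable (μ := volume) (μ * (0 - w)) 0) (hc.intervalIntegrable _ _)]
    congr 2 <;> ring
  have e3 : δ ≤ ∫ s in (0 : ℝ)..μ * (1 - w), h s := hmain _ (by nlinarith) b hb
  have e4 : δ ≤ ∫ s in (0 : ℝ)..μ * w, h (-s) := by
    have := hmain (μ * w) (by nlinarith) (fun j => (-1) ^ (n + 1) * ((-1) ^ j * b j))
      (fun j hj => by simpa [abs_mul] using hb j hj)
    refine this.trans_eq (intervalIntegral.integral_congr fun s _ => ?_)
    have key : (-s) ^ (n + 1) + ∑ j ∈ Finset.range n, b j * (-s) ^ j = (-1) ^ (n + 1) *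
        (s ^ (n + 1) + ∑ j ∈ Finset.range n, (-1) ^ (n + 1) * ((-1) ^ j * b j) * s ^ j) := by
      have h1 : ((-1 : ℝ) ^ (n + 1)) * (-1) ^ (n + 1) = 1 := by
        rw [← mul_pow]; norm_num
      rw [mul_add, Finset.mul_sum, neg_pow s]
      congr 1
      refine Finset.sum_congr rfl fun j _ => ?_
      rw [neg_pow s j]
      linear_combination (-(b j * (-1) ^ j * s ^ j)) * h1
    simp only [h]
    rw [key]
    rcases neg_one_pow_eq_or ℝ (n + 1) with h1 | h1 <;> rw [h1]
    · simp
    · rw [← Real.cos_neg]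
      congr 1
      ring
  change 2 * δ / μ ≤ ∫ y in (0 : ℝ)..1, h (μ * (y - w))
  rw [e1, e2, div_eq_inv_mul]
  gcongr
  linarith

/-- Adding to one coordinate a measurable function of the other coordinates preserves volume. -/
theorem measurePreserving_update_add {ι : Type*} [Fintype ι] [DecidableEq ι] (i : ι)
    {g : (ι → ℝ) → ℝ} (hg : Measurable g)
    (hgi : ∀ x t, g (Function.update x i t) = g x) :
    MeasurePreserving fun x : ι → ℝ => Function.update x i (x i + g x) := by
  have hS : Measurable fun x : ι → ℝ => Function.update x i (x i + g x) := by
    refine measurable_pi_lambda _ fun j => ?_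
    by_cases h : j = i
    · subst h
      simpa [Pi.add_def] using (measurable_pi_apply j).add hg
    · simpa [h] using measurable_pi_apply j
  refine ⟨hS, Measure.ext_of_lintegral _ fun f hf => ?_⟩
  rw [lintegral_map hf hS, volume_pi, lintegral_eq_lmarginal_univ (0 : ι → ℝ),
    lintegral_eq_lmarginal_univ (0 : ι → ℝ),
    lmarginal_erase' (fun a => f (Function.update a i (a i + g a))) (hf.comp hS)
      (Finset.mem_univ i),
    lmarginal_erase' _ hf (Finset.mem_univ i)]
  congr 1
  funext x
  simp only [hgi, Function.update_self, Function.update_idem]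
  exact lintegral_add_right_eq_self (fun t => f (Function.update x i t)) (g x)

/-- A triangular map `x ↦ x + g x`, with `g x i` depending only on the coordinates of rank larger
than that of `i`, preserves volume. -/
theorem measurePreserving_add_of_triangular {ι : Type*} [Fintype ι] (r : ι → ℕ)
    {g : ι → (ι → ℝ) → ℝ} (hg : ∀ i, Measurable (g i))
    (hdep : ∀ i x y, (∀ j, r i < r j → x j = y j) → g i x = g i y) :
    MeasurePreserving fun (x : ι → ℝ) i => x i + g i x := by
  classical
  have key : ∀ s : Finset ι,
      MeasurePreserving fun (x : ι → ℝ) i => if i ∈ s then x i + g i x else x i := by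
    intro s
    induction s using Finset.induction_on_max_value r with
    | empty =>
      simp only [Finset.notMem_empty, if_false]
      exact MeasurePreserving.id _
    | insert a s ha hmax ih =>
      have hshear := measurePreserving_update_add a (hg a) fun x t =>
        hdep a _ _ fun j hj => Function.update_of_ne (by rintro rfl; exact lt_irrefl _ hj) _ _
      convert hshear.comp ih using 1
      funext x i
      have hgx : g a (fun i => if i ∈ s then x i + g i x else x i) = g a x :=
        hdep a _ _ fun j hj => if_neg fun hjs => absurd (hmax j hjs) (not_le.2 hj)
      by_cases hia : i = a
      · subst hia
        simp [hgx, ha]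
      · simp [hia]
  simpa using key Finset.univ

theorem sum_Idx {k : ℕ} (F : ℕ → ℕ → ℝ) :
    ∑ β : Idx k, F β.1.1 β.1.2 = ∑ i ∈ Finset.range (k + 1), ∑ l ∈ Finset.range (k + 1),
      if 1 ≤ i + l ∧ i + l ≤ k then F i l else 0 := by
  calc ∑ β : Idx k, F β.1.1 β.1.2
      = ∑ p : Fin (k + 1) × Fin (k + 1) with 1 ≤ (p.1 : ℕ) + p.2 ∧ (p.1 : ℕ) + p.2 ≤ k,
          F p.1 p.2 :=
        (Finset.sum_subtype (p := fun p : Fin (k + 1) × Fin (k + 1) =>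
          1 ≤ (p.1 : ℕ) + p.2 ∧ (p.1 : ℕ) + p.2 ≤ k) _ (by simp)
          (fun p : Fin (k + 1) × Fin (k + 1) => F p.1 p.2)).symm
    _ = _ := by
      rw [Finset.sum_filter, Fintype.sum_prod_type]
      simp only [Finset.sum_range]

theorem sum_range_mul_sub (n : ℕ) (K : ℝ) :
    ∑ i ∈ Finset.range n, (i : ℝ) * (K - i) =
      K * (n * (n - 1) / 2) - (n - 1) * n * (2 * n - 1) / 6 := by
  induction n with
  | zero => simp
  | succ n ih => rw [Finset.sum_range_succ, ih]; push_cast; ring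

theorem sum_Idx_fst (k : ℕ) :
    ∑ β : Idx k, ((β.1.1 : ℕ) : ℝ) = (k : ℝ) * (k + 1) * (k + 2) / 6 := by
  rw [sum_Idx fun i _ => (i : ℝ)]
  have : ∀ i ∈ Finset.range (k + 1), (∑ l ∈ Finset.range (k + 1),
      if 1 ≤ i + l ∧ i + l ≤ k then (i : ℝ) else 0) = i * ((k + 1) - i) := by
    intro i hi
    have hi := Finset.mem_range.1 hi
    rcases Nat.eq_zero_or_pos i with rfl | h0
    · simp
    · rw [← Finset.sum_filter, Finset.sum_const,
        show ({l ∈ Finset.range (k + 1) | 1 ≤ i + l ∧ i + l ≤ k}) = Finset.range (k + 1 - i) by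
          ext l; simp only [Finset.mem_filter, Finset.mem_range]; omega,
        Finset.card_range, nsmul_eq_mul, Nat.cast_sub (by omega)]
      push_cast; ring
  rw [Finset.sum_congr rfl this, sum_range_mul_sub]
  push_cast; ring

theorem eval_eq_sum_Idx {k j : ℕ} (p : Polynomial ℝ) (hp : p.natDegree + j ≤ k) (v : ℝ) :
    p.eval v = (∑ β : Idx k, if (β.1.1 : ℕ) = j then p.coeff β.1.2 * v ^ (β.1.2 : ℕ) else 0) +
      if j = 0 then p.coeff 0 else 0 := by
  rw [sum_Idx fun i l => if i = j then p.coeff l * v ^ l else 0,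
    Finset.sum_eq_single j (fun i _ hij => by simp [hij]) (by simp; omega),
    Polynomial.eval_eq_sum_range' (n := k + 1) (by omega)]
  rcases Nat.eq_zero_or_pos j with rfl | h0
  · rw [Finset.sum_range_succ', Finset.sum_range_succ']
    simp
    refine Finset.sum_congr rfl fun l hl => ?_
    have := Finset.mem_range.1 hl
    rw [if_pos (by omega)]
  · simp only [if_true, if_neg h0.ne', add_zero]
    refine Finset.sum_congr rfl fun l hl => ?_
    by_cases h : j + l ≤ k
    · rw [if_pos (by omega)]
    · rw [if_neg (by omega), Polynomial.coeff_eq_zero_of_natDegree_lt (by omega), zero_mul]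

/-- The polynomial `(a v + t) ^ m v ^ n` in the variable `v`. -/
def stripPoly (a t : ℝ) (m n : ℕ) : Polynomial ℝ :=
  (Polynomial.C a * Polynomial.X + Polynomial.C t) ^ m * Polynomial.X ^ n

theorem eval_stripPoly (a t : ℝ) (m n : ℕ) (v : ℝ) :
    (stripPoly a t m n).eval v = (a * v + t) ^ m * v ^ n := by
  simp [stripPoly]

theorem natDegree_stripPoly_le (a t : ℝ) (m n : ℕ) : (stripPoly a t m n).natDegree ≤ m + n := by
  unfold stripPoly
  refine Polynomial.natDegree_mul_le.trans (add_le_add ?_ (Polynomial.natDegree_X_pow_le n))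
  refine (Polynomial.natDegree_pow_le_of_le m (Polynomial.natDegree_linear_le)).trans (by simp)

theorem measurable_coeff_stripPoly {Ω : Type*} [MeasurableSpace Ω] {a t : Ω → ℝ}
    (ha : Measurable a) (ht : Measurable t) (m n l : ℕ) :
    Measurable fun x => (stripPoly (a x) (t x) m n).coeff l := by
  unfold stripPoly
  induction m generalizing n l with
  | zero => simp
  | succ m ih =>
    have : ∀ x, ((Polynomial.C (a x) * Polynomial.X + Polynomial.C (t x)) ^ (m + 1) *
        Polynomial.X ^ n : Polynomial ℝ).coeff l =
        a x * ((Polynomial.C (a x) * Polynomial.X + Polynomial.C (t x)) ^ m *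
          Polynomial.X ^ (n + 1) : Polynomial ℝ).coeff l +
        t x * ((Polynomial.C (a x) * Polynomial.X + Polynomial.C (t x)) ^ m *
          Polynomial.X ^ n : Polynomial ℝ).coeff l := by
      intro x
      rw [← Polynomial.coeff_C_mul, ← Polynomial.coeff_C_mul, ← Polynomial.coeff_add]
      congr 1
      ring
    simp only [this]
    exact (ha.mul (ih _ _)).add (ht.mul (ih _ _))

/-- The coefficient of `u ^ j` (a function of `v`) in `P((u + a v + t, v); x)`. -/
def stripCoeff {k : ℕ} (x : Idx k → ℝ) (a t : ℝ) (j : ℕ) (v : ℝ) : ℝ :=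
  ∑ β : Idx k, x β * ((β.1.1 : ℕ).choose j : ℝ) *
    ((a * v + t) ^ ((β.1.1 : ℕ) - j) * v ^ (β.1.2 : ℕ))

theorem Pphase_eq_sum_stripCoeff {k : ℕ} (x : Idx k → ℝ) (a t : ℝ) (ξ : Fin 2 → ℝ) :
    Pphase k x ξ = ∑ j ∈ Finset.range (k + 1),
      stripCoeff x a t j (ξ 1) * (ξ 0 - (a * ξ 1 + t)) ^ j := by
  unfold Pphase stripCoeff
  simp only [Finset.sum_mul]
  rw [Finset.sum_comm]
  refine Finset.sum_congr rfl fun β _ => ?_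
  have hβ : (β.1.1 : ℕ) + 1 ≤ k + 1 := β.1.1.2
  conv_lhs => rw [show ξ 0 = (ξ 0 - (a * ξ 1 + t)) + (a * ξ 1 + t) by ring, add_pow]
  rw [Finset.mul_sum, Finset.sum_mul]
  refine (Finset.sum_subset (Finset.range_mono hβ) fun j _ hj => ?_).trans ?_
  · rw [Nat.choose_eq_zero_of_lt (by simpa using hj)]
    simp
  · exact Finset.sum_congr rfl fun j _ => by ring

/-- The contribution of the coefficients of larger degree in `ξ₁` to the coefficient of
`u ^ j v ^ l` in `P((u + a v + t, v); x)`. -/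
def upperPart {k : ℕ} (x : Idx k → ℝ) (a t : ℝ) (j l : ℕ) : ℝ :=
  ∑ β : Idx k, if j < (β.1.1 : ℕ) then
    x β * ((β.1.1 : ℕ).choose j : ℝ) * (stripPoly a t ((β.1.1 : ℕ) - j) β.1.2).coeff l else 0

theorem stripCoeff_eq {k : ℕ} (x : Idx k → ℝ) (a t : ℝ) (j : ℕ) (v : ℝ) :
    stripCoeff x a t j v = (∑ β : Idx k, if (β.1.1 : ℕ) = j then
      (x β + upperPart x a t j β.1.2) * v ^ (β.1.2 : ℕ) else 0) +
      if j = 0 then upperPart x a t 0 0 else 0 := by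
  have h1 : ∀ β : Idx k,
      x β * ((β.1.1 : ℕ).choose j : ℝ) * ((a * v + t) ^ ((β.1.1 : ℕ) - j) * v ^ (β.1.2 : ℕ)) =
      (if (β.1.1 : ℕ) = j then x β * v ^ (β.1.2 : ℕ) else 0) +
      if j < (β.1.1 : ℕ) then x β * ((β.1.1 : ℕ).choose j : ℝ) *
        ((∑ γ : Idx k, if (γ.1.1 : ℕ) = j then
          (stripPoly a t ((β.1.1 : ℕ) - j) β.1.2).coeff γ.1.2 * v ^ (γ.1.2 : ℕ) else 0) +
        if j = 0 then (stripPoly a t ((β.1.1 : ℕ) - j) β.1.2).coeff 0 else 0) else 0 := by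
    intro β
    rcases lt_trichotomy (β.1.1 : ℕ) j with h | h | h
    · rw [Nat.choose_eq_zero_of_lt h, if_neg h.ne, if_neg (by omega)]
      simp
    · rw [if_pos h, if_neg (by omega), h]
      simp
    · have hdeg := natDegree_stripPoly_le a t ((β.1.1 : ℕ) - j) β.1.2
      have hβ := β.2.2
      rw [if_neg h.ne', if_pos h, ← eval_eq_sum_Idx _ (by omega), eval_stripPoly]
      simp
  unfold stripCoeff
  simp only [h1]
  have h2 : ∀ γ : Idx k, (if (γ.1.1 : ℕ) = j then
      (x γ + upperPart x a t j γ.1.2) * v ^ (γ.1.2 : ℕ) else 0) =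
      (if (γ.1.1 : ℕ) = j then x γ * v ^ (γ.1.2 : ℕ) else 0) +
      ∑ β : Idx k, if j < (β.1.1 : ℕ) then x β * ((β.1.1 : ℕ).choose j : ℝ) *
        (if (γ.1.1 : ℕ) = j then
          (stripPoly a t ((β.1.1 : ℕ) - j) β.1.2).coeff γ.1.2 * v ^ (γ.1.2 : ℕ) else 0) else 0 := by
    intro γ
    by_cases h : (γ.1.1 : ℕ) = j
    · simp only [if_pos h, upperPart, add_mul, Finset.sum_mul, ite_mul, zero_mul, mul_assoc]
    · simp [h]
  simp only [h2]
  rw [Finset.sum_add_distrib, Finset.sum_add_distrib, add_assoc, Finset.sum_comm (γ := Idx k)]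
  congr 1
  have h3 : (if j = 0 then upperPart x a t 0 0 else 0) =
      ∑ β : Idx k, if j < (β.1.1 : ℕ) then x β * ((β.1.1 : ℕ).choose j : ℝ) *
        (if j = 0 then (stripPoly a t ((β.1.1 : ℕ) - j) β.1.2).coeff 0 else 0) else 0 := by
    by_cases h : j = 0
    · subst h; simp [upperPart]
    · simp [h]
  rw [h3, ← Finset.sum_add_distrib]
  refine Finset.sum_congr rfl fun β _ => ?_
  by_cases h : j < (β.1.1 : ℕ)
  · simp only [if_pos h, mul_add, Finset.mul_sum]
  · simp [h]

/-- The element `(i, l)` of the index set. -/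
def Idx.of {k : ℕ} (i l : ℕ) (h : 1 ≤ i + l ∧ i + l ≤ k) : Idx k :=
  ⟨(⟨i, by omega⟩, ⟨l, by omega⟩), h⟩

theorem Idx.eq_of {k : ℕ} {β : Idx k} {i l : ℕ} (h : 1 ≤ i + l ∧ i + l ≤ k)
    (hi : (β.1.1 : ℕ) = i) (hl : (β.1.2 : ℕ) = l) : β = Idx.of i l h :=
  Subtype.ext (Prod.ext (Fin.ext hi) (Fin.ext hl))

theorem Idx.of_inj {k i l i' l' : ℕ} {h : 1 ≤ i + l ∧ i + l ≤ k} {h' : 1 ≤ i' + l' ∧ i' + l' ≤ k} :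
    Idx.of i l h = Idx.of i' l' h' ↔ i = i' ∧ l = l' := by
  refine ⟨fun e => ⟨?_, ?_⟩, by rintro ⟨rfl, rfl⟩; rfl⟩
  · exact congrArg (fun β : Idx k => (β.1.1 : ℕ)) e
  · exact congrArg (fun β : Idx k => (β.1.2 : ℕ)) e

theorem stripCoeff_top {n : ℕ} (x : Idx (n + 1) → ℝ) (a t v : ℝ) :
    stripCoeff x a t (n + 1) v = x (Idx.of (n + 1) 0 (by omega)) := by
  unfold stripCoeff
  rw [Finset.sum_eq_single (Idx.of (n + 1) 0 (by omega))]
  · simp [Idx.of]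
  · intro β _ hβ
    have h := β.2.2
    have : (β.1.1 : ℕ) < n + 1 := by
      by_contra hlt
      exact hβ (Idx.eq_of _ (by omega) (by omega))
    rw [Nat.choose_eq_zero_of_lt this]
    simp
  · simp

theorem stripCoeff_pred {n : ℕ} (hn : 1 ≤ n) (x : Idx (n + 1) → ℝ) (a t v : ℝ) :
    stripCoeff x a t n v = x (Idx.of n 0 (by omega)) + x (Idx.of n 1 (by omega)) * v +
      (n + 1) * x (Idx.of (n + 1) 0 (by omega)) * (a * v + t) := by
  unfold stripCoeff
  classical
  have hsub : ∀ β : Idx (n + 1), β ∉ ({Idx.of n 0 (by omega), Idx.of n 1 (by omega),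
      Idx.of (n + 1) 0 (by omega)} : Finset (Idx (n + 1))) → (β.1.1 : ℕ) < n := by
    intro β hβ
    by_contra hlt
    have h := β.2.2
    simp only [Finset.mem_insert, Finset.mem_singleton, not_or] at hβ
    rcases Nat.lt_or_ge n (β.1.1 : ℕ) with h1 | h1
    · exact hβ.2.2 (Idx.eq_of _ (by omega) (by omega))
    · rcases Nat.eq_zero_or_pos (β.1.2 : ℕ) with h2 | h2
      · exact hβ.1 (Idx.eq_of _ (by omega) h2)
      · exact hβ.2.1 (Idx.eq_of _ (by omega) (by omega))
  rw [← Finset.sum_subset (Finset.subset_univ ({Idx.of n 0 (by omega), Idx.of n 1 (by omega),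
      Idx.of (n + 1) 0 (by omega)} : Finset (Idx (n + 1)))) (fun β _ hβ => by
        rw [Nat.choose_eq_zero_of_lt (hsub β hβ)]; simp),
    Finset.sum_insert, Finset.sum_insert, Finset.sum_singleton]
  · simp [Idx.of]
    ring
  · simp [Idx.of_inj]
  · simp [Idx.of_inj]

theorem continuous_Pphase {k : ℕ} (x : Idx k → ℝ) : Continuous (Pphase k x) := by
  unfold Pphase
  fun_prop

theorem integral_cos_le_norm_Eone {k : ℕ} (x : Idx k → ℝ) (c : ℝ) :
    ∫ v in (0 : ℝ)..1, ∫ y in (0 : ℝ)..1, cos (2 * π * (Pphase k x ![y, v] - c)) ≤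
      ‖Eone k x‖ := by
  have hP := continuous_Pphase x
  have hcompact : IsCompact (Icc (0 : Fin 2 → ℝ) 1) := isCompact_Icc
  have e1 : ∫ v in (0 : ℝ)..1, ∫ y in (0 : ℝ)..1, cos (2 * π * (Pphase k x ![y, v] - c)) =
      ∫ ξ in Icc (0 : Fin 2 → ℝ) 1, cos (2 * π * (Pphase k x ξ - c)) := by
    have hmp := volume_preserving_finTwoArrow ℝ
    have hpre : Icc (0 : Fin 2 → ℝ) 1 =
        MeasurableEquiv.finTwoArrow ⁻¹' (Icc (0 : ℝ) 1 ×ˢ Icc (0 : ℝ) 1) := by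
      ext ξ
      simp [MeasurableEquiv.finTwoArrow, Pi.le_def, Fin.forall_fin_two]
    have hint : ∀ ξ : Fin 2 → ℝ, cos (2 * π * (Pphase k x ξ - c)) =
        (fun p : ℝ × ℝ => cos (2 * π * (Pphase k x ![p.1, p.2] - c)))
          (MeasurableEquiv.finTwoArrow ξ) := by
      intro ξ
      have : ![ξ 0, ξ 1] = ξ := by ext i; fin_cases i <;> rfl
      simp [MeasurableEquiv.finTwoArrow, this]
    have hc : Continuous fun p : ℝ × ℝ => cos (2 * π * (Pphase k x ![p.2, p.1] - c)) := by
      have : Continuous fun p : ℝ × ℝ => (![p.2, p.1] : Fin 2 → ℝ) := by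
        refine continuous_pi fun i => ?_
        fin_cases i
        exacts [continuous_snd, continuous_fst]
      fun_prop
    rw [integral_congr_ae (Filter.Eventually.of_forall hint), hpre,
      hmp.setIntegral_preimage_emb (MeasurableEquiv.measurableEmbedding _)
        (fun p : ℝ × ℝ => cos (2 * π * (Pphase k x ![p.1, p.2] - c))),
      Measure.volume_eq_prod, ← setIntegral_prod_swap, setIntegral_prod]
    · simp only [intervalIntegral.integral_of_le zero_le_one, ← integral_Icc_eq_integral_Ioc,
        Prod.swap]
    · exact (hc.continuousOn.integrableOn_compact (isCompact_Icc.prod isCompact_Icc))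
  have hcontE : Continuous fun ξ : Fin 2 → ℝ =>
      Complex.exp (2 * Real.pi * Complex.I * (Pphase k x ξ)) := by fun_prop
  have e2 : ∫ ξ in Icc (0 : Fin 2 → ℝ) 1, cos (2 * π * (Pphase k x ξ - c)) =
      (Complex.exp (((-(2 * π * c) : ℝ) : ℂ) * Complex.I) * Eone k x).re := by
    unfold Eone
    rw [← integral_const_mul]
    refine Eq.trans ?_ (integral_re (𝕜 := ℂ)
      ((continuous_const.mul hcontE).continuousOn.integrableOn_compact hcompact))
    refine integral_congr_ae (Filter.Eventually.of_forall fun ξ => ?_)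
    simp only [← Complex.exp_add]
    rw [show ((-(2 * π * c) : ℝ) : ℂ) * Complex.I + 2 * Real.pi * Complex.I * (Pphase k x ξ) =
      ((2 * π * (Pphase k x ξ - c) : ℝ) : ℂ) * Complex.I by push_cast; ring]
    exact (Complex.exp_ofReal_mul_I_re _).symm
  rw [e1, e2]
  calc _ ≤ ‖Complex.exp (((-(2 * π * c) : ℝ) : ℂ) * Complex.I) * Eone k x‖ := Complex.re_le_norm _
    _ = _ := by rw [norm_mul, Complex.norm_exp_ofReal_mul_I, one_mul]

/-- The slope of the strip determined by the leading coefficients of `x`. -/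
def stripSlope {n : ℕ} (hn : 1 ≤ n) (x : Idx (n + 1) → ℝ) : ℝ :=
  -x (Idx.of n 1 (by omega)) / ((n + 1) * x (Idx.of (n + 1) 0 (by omega)))

/-- The offset of the strip determined by the leading coefficients of `x`. -/
def stripOffset {n : ℕ} (hn : 1 ≤ n) (x : Idx (n + 1) → ℝ) : ℝ :=
  -x (Idx.of n 0 (by omega)) / ((n + 1) * x (Idx.of (n + 1) 0 (by omega)))

/-- `Eone` is at least a constant times `1 / r` if, in the coordinates adapted to a strip, the
coefficient of `u ^ j v ^ l` is at most a small constant times `r ^ j` and the leading coefficient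
is comparable to `r ^ (n + 1)`. -/
theorem exists_le_norm_Eone {n : ℕ} (hn : 1 ≤ n) :
    ∃ κ > 0, ∃ ε > 0, ∃ M : ℝ, 1 ≤ M ∧ ∀ (r : ℝ) (x : Idx (n + 1) → ℝ), M ≤ r →
      r ^ (n + 1) ≤ x (Idx.of (n + 1) 0 (by omega)) →
      x (Idx.of (n + 1) 0 (by omega)) ≤ 3 / 2 * r ^ (n + 1) →
      -((n + 1) * r ^ (n + 1) / 2) ≤ x (Idx.of n 0 (by omega)) →
      x (Idx.of n 0 (by omega)) ≤ -(3 * (n + 1) * r ^ (n + 1) / 8) →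
      -((n + 1) * r ^ (n + 1) / 4) ≤ x (Idx.of n 1 (by omega)) →
      x (Idx.of n 1 (by omega)) ≤ 0 →
      (∀ β : Idx (n + 1), (β.1.1 : ℕ) < n →
        |x β + upperPart x (stripSlope hn x) (stripOffset hn x) β.1.1 β.1.2| ≤
          ε * r ^ (β.1.1 : ℕ)) →
      κ / r ≤ ‖Eone (n + 1) x‖ := by
  obtain ⟨δ, hδ, ε, hε, M, hM1, hmain⟩ := exists_le_integral_cos_translated n hn
  set K : ℝ := ((Fintype.card (Idx (n + 1)) : ℕ) : ℝ) with hK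
  have hK0 : 0 ≤ K := by positivity
  refine ⟨2 / 3 * δ, by positivity, ε / (K + 1), by positivity, M, hM1,
    fun r x hr hX1 hX2 ht1 ht2 ha1 ha2 hbd => ?_⟩
  set X : ℝ := x (Idx.of (n + 1) 0 (by omega)) with hX
  set a := stripSlope hn x with ha
  set t := stripOffset hn x with ht
  have hr0 : 0 < r := by linarith
  have hrn : 0 < r ^ (n + 1) := by positivity
  have hX0 : 0 < X := by linarith
  have hn0 : (0 : ℝ) < n + 1 := by positivity
  have hd0 : 0 < (n + 1) * X := by positivity
  have ha0 : 0 ≤ a := div_nonneg (by linarith) hd0.le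
  have ha4 : a ≤ 1 / 4 := by
    rw [ha, stripSlope, div_le_iff₀ hd0]
    nlinarith
  have ht0 : 1 / 4 ≤ t := by
    rw [ht, stripOffset, le_div_iff₀ hd0]
    nlinarith
  have ht4 : t ≤ 1 / 2 := by
    rw [ht, stripOffset, div_le_iff₀ hd0]
    nlinarith
  set μ : ℝ := X ^ ((1 : ℝ) / ((n + 1 : ℕ) : ℝ)) with hμ
  have hμ0 : 0 < μ := by positivity
  have hμX : μ ^ (n + 1) = X := by
    rw [hμ, ← Real.rpow_natCast, ← Real.rpow_mul hX0.le, one_div_mul_cancel (by positivity),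
      Real.rpow_one]
  have hrμ : r ≤ μ := le_of_pow_le_pow_left₀ (n := n + 1) (by omega) hμ0.le (by rw [hμX]; exact hX1)
  have hμr : μ ≤ 3 / 2 * r := by
    refine le_of_pow_le_pow_left₀ (n := n + 1) (by omega) (by positivity) ?_
    rw [hμX, mul_pow]
    refine hX2.trans (mul_le_mul_of_nonneg_right ?_ hrn.le)
    exact le_self_pow₀ (by norm_num) (by omega)
  set c : ℝ := upperPart x a t 0 0 with hc
  have hslice : ∀ v ∈ Icc (0 : ℝ) 1,
      δ / μ ≤ ∫ y in (0 : ℝ)..1, cos (2 * π * (Pphase (n + 1) x ![y, v] - c)) := by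
    intro v hv
    set b : ℕ → ℝ := fun j => (stripCoeff x a t j v - if j = 0 then c else 0) / μ ^ j with hb
    have hb' : ∀ j < n, |b j| ≤ ε := by
      intro j hj
      rw [hb]
      simp only
      rw [stripCoeff_eq, ← hc, add_sub_cancel_right, abs_div, abs_of_pos (pow_pos hμ0 j),
        div_le_iff₀ (pow_pos hμ0 j)]
      calc _ ≤ ∑ β : Idx (n + 1), |if (β.1.1 : ℕ) = j then
            (x β + upperPart x a t j β.1.2) * v ^ (β.1.2 : ℕ) else 0| :=
            Finset.abs_sum_le_sum_abs _ _
        _ ≤ ∑ β : Idx (n + 1), ε / (K + 1) * r ^ j := by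
          refine Finset.sum_le_sum fun β _ => ?_
          by_cases h : (β.1.1 : ℕ) = j
          · rw [if_pos h, abs_mul]
            have h1 := hbd β (by omega)
            rw [h] at h1
            have h2 : |v ^ (β.1.2 : ℕ)| ≤ 1 := by
              rw [abs_of_nonneg (pow_nonneg hv.1 _)]
              exact pow_le_one₀ hv.1 hv.2
            calc _ ≤ ε / (K + 1) * r ^ j * 1 := by gcongr
              _ = _ := mul_one _
          · rw [if_neg h, abs_zero]
            positivity
        _ = K / (K + 1) * (ε * r ^ j) := by
          rw [Finset.sum_const, Finset.card_univ, nsmul_eq_mul, ← hK]; ring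
        _ ≤ 1 * (ε * μ ^ j) := by
          gcongr
          rw [div_le_one (by linarith)]; linarith
        _ = _ := one_mul _
    have hw := hmain μ (a * v + t) b (hr.trans hrμ) (by nlinarith [mul_nonneg ha0 hv.1])
      (by nlinarith [mul_nonneg ha0 hv.1, hv.2]) hb'
    refine hw.trans_eq (intervalIntegral.integral_congr fun y _ => ?_)
    congr 2
    rw [Pphase_eq_sum_stripCoeff x a t, Finset.sum_range_succ, Finset.sum_range_succ,
      stripCoeff_top, stripCoeff_pred hn]
    have hzero : x (Idx.of n 0 (by omega)) + x (Idx.of n 1 (by omega)) * v +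
        (n + 1) * X * (a * v + t) = 0 := by
      rw [ha, ht, stripSlope, stripOffset, ← hX]
      field_simp
      ring
    simp only [Matrix.cons_val_zero, Matrix.cons_val_one]
    rw [← hX, hzero, mul_pow, hμX]
    have hsum : ∑ j ∈ Finset.range n, b j * (μ * (y - (a * v + t))) ^ j =
        ∑ j ∈ Finset.range n, stripCoeff x a t j v * (y - (a * v + t)) ^ j - c := by
      have : c = ∑ j ∈ Finset.range n, (if j = 0 then c else 0) * (y - (a * v + t)) ^ j := by
        rw [Finset.sum_eq_single 0 (fun j _ hj => by simp [hj])
          (fun h => absurd (Finset.mem_range.2 hn) h)]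
        simp
      conv_rhs => rw [this]
      rw [← Finset.sum_sub_distrib]
      refine Finset.sum_congr rfl fun j _ => ?_
      rw [hb, mul_pow]
      have := (pow_pos hμ0 j).ne'
      field_simp
    rw [hsum]
    ring
  have hcont : Continuous fun v : ℝ =>
      ∫ y in (0 : ℝ)..1, cos (2 * π * (Pphase (n + 1) x ![y, v] - c)) := by
    refine intervalIntegral.continuous_parametric_intervalIntegral_of_continuous' ?_ 0 1
    have hP := continuous_Pphase x
    have : Continuous fun p : ℝ × ℝ => (![p.2, p.1] : Fin 2 → ℝ) := by
      refine continuous_pi fun i => ?_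
      fin_cases i
      exacts [continuous_snd, continuous_fst]
    change Continuous fun p : ℝ × ℝ => cos (2 * π * (Pphase (n + 1) x ![p.2, p.1] - c))
    fun_prop
  have hconst : δ / μ ≤
      ∫ v in (0 : ℝ)..1, ∫ y in (0 : ℝ)..1, cos (2 * π * (Pphase (n + 1) x ![y, v] - c)) := by
    have := intervalIntegral.integral_mono_on (μ := volume) zero_le_one
      (intervalIntegrable_const (c := δ / μ)) (hcont.intervalIntegrable 0 1) hslice
    simpa using this
  refine le_trans ?_ (hconst.trans (integral_cos_le_norm_Eone x c))
  rw [div_le_div_iff₀ hr0 hμ0]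
  nlinarith

theorem measurePreserving_stripShear {n : ℕ} (hn : 1 ≤ n) :
    MeasurePreserving fun (x : Idx (n + 1) → ℝ) (β : Idx (n + 1)) =>
      x β + if (β.1.1 : ℕ) < n then
        upperPart x (stripSlope hn x) (stripOffset hn x) β.1.1 β.1.2 else 0 := by
  have hslope : Measurable (stripSlope hn) := by unfold stripSlope; fun_prop
  have hoffset : Measurable (stripOffset hn) := by unfold stripOffset; fun_prop
  refine measurePreserving_add_of_triangular (fun β : Idx (n + 1) => (β.1.1 : ℕ)) (fun β => ?_)
    fun β x y hxy => ?_
  · by_cases h : (β.1.1 : ℕ) < n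
    · simp only [if_pos h, upperPart]
      refine Finset.measurable_sum _ fun γ _ => ?_
      by_cases hγ : (β.1.1 : ℕ) < (γ.1.1 : ℕ)
      · simp only [if_pos hγ]
        exact ((measurable_pi_apply γ).mul_const _).mul
          (measurable_coeff_stripPoly hslope hoffset _ _ _)
      · simp only [if_neg hγ, measurable_const]
    · simp only [if_neg h, measurable_const]
  · by_cases h : (β.1.1 : ℕ) < n
    · have h1 := hxy (Idx.of (n + 1) 0 (by omega)) (Nat.lt_succ_of_lt h)
      have h2 := hxy (Idx.of n 0 (by omega)) h
      have h3 := hxy (Idx.of n 1 (by omega)) h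
      simp only [if_pos h, upperPart, stripSlope, stripOffset, h1, h2, h3]
      refine Finset.sum_congr rfl fun γ _ => ?_
      by_cases hγ : (β.1.1 : ℕ) < (γ.1.1 : ℕ)
      · simp only [if_pos hγ, hxy γ hγ]
      · simp only [if_neg hγ]
    · simp only [if_neg h]

theorem sum_Idx_boxExponent (n : ℕ) (hn : 1 ≤ n) :
    ((∑ β : Idx (n + 1), if n ≤ (β.1.1 : ℕ) then n + 1 else (β.1.1 : ℕ) : ℕ) : ℝ) =
      ((n + 1 : ℕ) : ℝ) * ((n + 1 : ℕ) + 1) * ((n + 1 : ℕ) + 2) / 6 + 2 := by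
  rw [← sum_Idx_fst, Nat.cast_sum]
  have h1 : ∀ β : Idx (n + 1), ((if n ≤ (β.1.1 : ℕ) then n + 1 else (β.1.1 : ℕ) : ℕ) : ℝ) =
      ((β.1.1 : ℕ) : ℝ) + if (β.1.1 : ℕ) = n then 1 else 0 := by
    intro β
    have h := β.2.2
    rcases lt_trichotomy (β.1.1 : ℕ) n with h' | h' | h'
    · rw [if_neg (by omega), if_neg (by omega), add_zero]
    · rw [if_pos (by omega), if_pos h', h']
      push_cast; ring
    · rw [if_pos (by omega), if_neg (by omega), add_zero]
      congr 1
      omega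
  rw [Finset.sum_congr rfl fun β _ => h1 β, Finset.sum_add_distrib,
    sum_Idx fun i _ => if i = n then (1 : ℝ) else 0]
  congr 1
  rw [Finset.sum_eq_single n (fun i _ hi => by simp [hi]) (by simp)]
  simp only [if_true]
  rw [← Finset.sum_filter, show ({l ∈ Finset.range (n + 1 + 1) | 1 ≤ n + l ∧ n + l ≤ n + 1}) =
    Finset.range 2 by ext l; simp only [Finset.mem_filter, Finset.mem_range]; omega]
  simp

/-- Lower bound part of Theorem 1.2: for every `k ≥ 2` and every real `p` with
`0 < p ≤ q_k`, where `q_k = k(k+1)(k+2)/6 + 2`, the integral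
`∫_{ℝ^N} |E_k1(x)|^p dx` is infinite. -/
theorem tarry_lower_bound (k : ℕ) (hk : 2 ≤ k) :
    ∀ p : ℝ, 0 < p → p ≤ (k : ℝ) * (k + 1) * (k + 2) / 6 + 2 →
      (∫⁻ x : Idx k → ℝ, ENNReal.ofReal (‖Eone k x‖ ^ p)) = ⊤ := by
  intro p hp hpq
  obtain ⟨n, rfl⟩ : ∃ n, k = n + 1 := ⟨k - 1, by omega⟩
  have hn : 1 ≤ n := by omega
  rw [← sum_Idx_boxExponent n hn] at hpq
  set e : Idx (n + 1) → ℕ := fun β => if n ≤ (β.1.1 : ℕ) then n + 1 else (β.1.1 : ℕ) with he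
  set Q : ℕ := ∑ β, e β with hQ
  obtain ⟨κ₀, hκ₀, ε, hε, M, hM1, hlow⟩ := exists_le_norm_Eone hn
  set κ : ℝ := min κ₀ 1 with hκ
  have hκ0 : 0 < κ := by positivity
  let lo : ℝ → Idx (n + 1) → ℝ := fun r β =>
    if (β.1.1 : ℕ) = n + 1 then r ^ (n + 1) else if (β.1.1 : ℕ) = n then
      (if (β.1.2 : ℕ) = 0 then -((n + 1) * r ^ (n + 1) / 2) else -((n + 1) * r ^ (n + 1) / 4))
      else -(ε * r ^ (β.1.1 : ℕ))
  let hi : ℝ → Idx (n + 1) → ℝ := fun r β =>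
    if (β.1.1 : ℕ) = n + 1 then 3 / 2 * r ^ (n + 1) else if (β.1.1 : ℕ) = n then
      (if (β.1.2 : ℕ) = 0 then -(3 * (n + 1) * r ^ (n + 1) / 8) else 0)
      else ε * r ^ (β.1.1 : ℕ)
  let len : Idx (n + 1) → ℝ := fun β =>
    if (β.1.1 : ℕ) = n + 1 then 1 / 2 else if (β.1.1 : ℕ) = n then
      (if (β.1.2 : ℕ) = 0 then (n + 1) / 8 else (n + 1) / 4) else 2 * ε
  have hlen : ∀ r β, hi r β - lo r β = len β * r ^ e β := by
    intro r β
    have h := β.2.2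
    simp only [hi, lo, len, he]
    by_cases h1 : (β.1.1 : ℕ) = n + 1
    · simp only [if_pos h1, if_pos (show n ≤ (β.1.1 : ℕ) by omega)]; ring
    · by_cases h2 : (β.1.1 : ℕ) = n
      · simp only [if_neg h1, if_pos h2, if_pos (show n ≤ (β.1.1 : ℕ) by omega)]
        split_ifs <;> ring
      · simp only [if_neg h1, if_neg h2, if_neg (show ¬ n ≤ (β.1.1 : ℕ) by omega)]; ring
  have hlen0 : ∀ β, 0 < len β := by
    intro β
    simp only [len]
    split_ifs <;> positivity
  have hT := measurePreserving_stripShear hn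
  set T : (Idx (n + 1) → ℝ) → Idx (n + 1) → ℝ := fun x β =>
      x β + if (β.1.1 : ℕ) < n then
        upperPart x (stripSlope hn x) (stripOffset hn x) β.1.1 β.1.2 else 0 with hTdef
  have hTtop : ∀ x, T x (Idx.of (n + 1) 0 (by omega)) = x (Idx.of (n + 1) 0 (by omega)) := by
    intro x; simp [hTdef, Idx.of]
  have hT0 : ∀ x, T x (Idx.of n 0 (by omega)) = x (Idx.of n 0 (by omega)) := by
    intro x; simp [hTdef, Idx.of]
  have hT1 : ∀ x, T x (Idx.of n 1 (by omega)) = x (Idx.of n 1 (by omega)) := by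
    intro x; simp [hTdef, Idx.of]
  let r : ℕ → ℝ := fun m => M * 2 ^ m
  have hr : ∀ m, M ≤ r m := fun m =>
    le_mul_of_one_le_right (by linarith) (one_le_pow₀ (by norm_num))
  have hr0 : ∀ m, 0 < r m := fun m => by linarith [hr m]
  let G : ℕ → Set (Idx (n + 1) → ℝ) := fun m =>
    T ⁻¹' Set.pi univ fun β => Ico (lo (r m) β) (hi (r m) β)
  have hbox : ∀ m, MeasurableSet (Set.pi univ fun β => Ico (lo (r m) β) (hi (r m) β)) :=
    fun m => MeasurableSet.univ_pi fun _ => measurableSet_Ico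
  have hGmeas : ∀ m, MeasurableSet (G m) := fun m => hT.measurable (hbox m)
  have hGtop : ∀ m, ∀ x ∈ G m, x (Idx.of (n + 1) 0 (by omega)) ∈
      Ico (r m ^ (n + 1)) (3 / 2 * r m ^ (n + 1)) := by
    intro m x hx
    have := hx (Idx.of (n + 1) 0 (by omega)) (mem_univ _)
    rw [hTtop] at this
    simpa [lo, hi, Idx.of] using this
  have hGvol : ∀ m, volume (G m) = ENNReal.ofReal ((∏ β, len β) * r m ^ Q) := by
    intro m
    rw [hT.measure_preimage (hbox m).nullMeasurableSet, Real.volume_pi_Ico,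
      ← ENNReal.ofReal_prod_of_nonneg fun β _ => by
        rw [hlen]; exact mul_nonneg (hlen0 β).le (pow_nonneg (hr0 m).le _)]
    simp only [hlen]
    rw [Finset.prod_mul_distrib, Finset.prod_pow_eq_pow_sum]
  have hGlow : ∀ m, ∀ x ∈ G m, (κ / r m) ^ Q ≤ ‖Eone (n + 1) x‖ ^ p := by
    intro m x hx
    have hκr : κ / r m ≤ 1 := by
      rw [div_le_one (hr0 m)]
      exact (min_le_right _ _).trans (hM1.trans (hr m))
    have hκr0 : 0 < κ / r m := div_pos hκ0 (hr0 m)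
    have h0 := hx (Idx.of n 0 (by omega)) (mem_univ _)
    have h1 := hx (Idx.of n 1 (by omega)) (mem_univ _)
    rw [hT0] at h0
    rw [hT1] at h1
    simp only [lo, hi, Idx.of, Nat.left_eq_add, one_ne_zero, if_false, if_true] at h0 h1
    have hE : κ / r m ≤ ‖Eone (n + 1) x‖ := by
      refine le_trans (div_le_div_of_nonneg_right (min_le_left _ _) (hr0 m).le)
        (hlow (r m) x (hr m) (hGtop m x hx).1 (hGtop m x hx).2.le h0.1 h0.2.le h1.1 h1.2.le
          fun β hβ => ?_)
      have hβT := hx β (mem_univ _)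
      simp only [hTdef, lo, hi, if_pos hβ, if_neg hβ.ne,
        if_neg (show ¬ (β.1.1 : ℕ) = n + 1 by omega)] at hβT
      exact abs_le.2 ⟨hβT.1, hβT.2.le⟩
    calc (κ / r m) ^ Q = (κ / r m) ^ (Q : ℝ) := (Real.rpow_natCast _ _).symm
      _ ≤ (κ / r m) ^ p := Real.rpow_le_rpow_of_exponent_ge hκr0 hκr hpq
      _ ≤ _ := Real.rpow_le_rpow hκr0.le hE hp.le
  have hGint : ∀ m, ENNReal.ofReal (κ ^ Q * ∏ β, len β) ≤
      ∫⁻ x in G m, ENNReal.ofReal (‖Eone (n + 1) x‖ ^ p) := by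
    intro m
    calc ENNReal.ofReal (κ ^ Q * ∏ β, len β)
        = ENNReal.ofReal ((κ / r m) ^ Q) * volume (G m) := by
          rw [hGvol, ← ENNReal.ofReal_mul (pow_nonneg (div_pos hκ0 (hr0 m)).le _), div_pow]
          congr 1
          have := (pow_pos (hr0 m) Q).ne'
          field_simp
      _ = ∫⁻ _ in G m, ENNReal.ofReal ((κ / r m) ^ Q) := (setLIntegral_const _ _).symm
      _ ≤ _ := setLIntegral_mono' (hGmeas m) fun x hx =>
          ENNReal.ofReal_le_ofReal (hGlow m x hx)
  have hlt : ∀ i j, i < j → 3 / 2 * r i ^ (n + 1) ≤ r j ^ (n + 1) := by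
    intro i j hij
    have h1 : 2 * r i ≤ r j := by
      have : (2 : ℝ) ^ (i + 1) ≤ 2 ^ j := pow_le_pow_right₀ (by norm_num) hij
      simp only [r]
      rw [pow_succ] at this
      nlinarith
    calc 3 / 2 * r i ^ (n + 1) ≤ 2 ^ (n + 1) * r i ^ (n + 1) := by
          refine mul_le_mul_of_nonneg_right ?_ (pow_nonneg (hr0 i).le _)
          exact le_trans (by norm_num) (le_self_pow₀ (by norm_num : (1 : ℝ) ≤ 2) (by omega))
      _ = (2 * r i) ^ (n + 1) := (mul_pow _ _ _).symm
      _ ≤ r j ^ (n + 1) := pow_le_pow_left₀ (by linarith [hr0 i]) h1 _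
  have hdisj : Pairwise (Function.onFun Disjoint G) := by
    intro i j hij
    refine Set.disjoint_left.2 fun x hxi hxj => ?_
    have h1 := hGtop i x hxi
    have h2 := hGtop j x hxj
    rcases lt_or_gt_of_ne hij with h | h
    · linarith [hlt i j h, h1.2, h2.1]
    · linarith [hlt j i h, h2.2, h1.1]
  refine top_unique ?_
  calc (⊤ : ℝ≥0∞) = ∑' _ : ℕ, ENNReal.ofReal (κ ^ Q * ∏ β, len β) :=
        (ENNReal.tsum_const_eq_top_of_ne_zero (ENNReal.ofReal_pos.2
          (mul_pos (pow_pos hκ0 _) (Finset.prod_pos fun β _ => hlen0 β))).ne').symm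
    _ ≤ ∑' m, ∫⁻ x in G m, ENNReal.ofReal (‖Eone (n + 1) x‖ ^ p) := ENNReal.tsum_le_tsum hGint
    _ = ∫⁻ x in ⋃ m, G m, ENNReal.ofReal (‖Eone (n + 1) x‖ ^ p) :=
        (lintegral_iUnion hGmeas hdisj _).symm
    _ ≤ _ := setLIntegral_le_lintegral _ _
end
end

section
/- For every integer k ≥ 2 such that q_k is even, and for every real p with 0 < p ≤ q_k, the Fourier extension estimate fails at exponent p: there is no finite constant C such that ‖E_k f‖_{L^p(ℝ^N)} ≤ C · ‖f‖_{L^∞([0,1]²)} holds for every f ∈ L^∞([0,1]²); indeed the constant function f ≡ 1 satisfies ‖f‖_{L^∞} = 1 while ∫_{ℝ^N} |E_k f(x)|^p dx = ∞. -/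
open MeasureTheory Real Set
open scoped ENNReal

noncomputable section

/-- The Fourier extension operator `E_k f(x) = ∫_{[0,1]²} f(ξ) e(P(ξ; x)) dξ`. -/
def Eext (k : ℕ) (f : (Fin 2 → ℝ) → ℂ) (x : Idx k → ℝ) : ℂ :=
  ∫ ξ in Icc (0 : Fin 2 → ℝ) 1, f ξ * Complex.exp (2 * Real.pi * Complex.I * (Pphase k x ξ))


/-- The integral of a Gaussian against a character, in real form. -/
theorem integral_gaussian_mul_character {ι : Type*} [Fintype ι] {r : ℝ} (hr : 0 < r) (d : ι → ℝ) :
    ∫ x : ι → ℝ, Complex.exp (-∑ i, ((π * r ^ 2 : ℝ) : ℂ) * (x i : ℂ) ^ 2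
        + ∑ i, (2 * π * Complex.I * d i) * x i)
      = (∏ i, r⁻¹ * Real.exp (-π * (d i / r) ^ 2) : ℝ) := by
  rw [GaussianFourier.integral_cexp_neg_sum_mul_add
    (fun _ => by rw [Complex.ofReal_re]; positivity) (fun i => 2 * π * Complex.I * d i)]
  push_cast
  refine Finset.prod_congr rfl fun i _ => ?_
  have hr' : (r : ℂ) ≠ 0 := by exact_mod_cast hr.ne'
  have hpi : (π : ℂ) ≠ 0 := by exact_mod_cast Real.pi_ne_zero
  congr 1
  · have h1 : ((π : ℂ) / (π * r ^ 2)) = (((r⁻¹) ^ 2 : ℝ) : ℂ) := by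
      push_cast; field_simp
    rw [h1]
    have h2 : (1 / 2 : ℂ) = ((1 / 2 : ℝ) : ℂ) := by push_cast; rfl
    rw [h2, ← Complex.ofReal_cpow (by positivity), ← Real.sqrt_eq_rpow,
      Real.sqrt_sq (by positivity)]
    push_cast; rfl
  · congr 1
    rw [mul_pow, mul_pow, Complex.I_sq]
    field_simp
    ring

/-- The second moment of a characteristic function dominates, up to a constant, the
normalised measure of the pairs of points whose images are close. -/
theorem measure_close_pairs_le_lintegral_sq {X ι : Type*} [MeasurableSpace X] [Fintype ι]
    (μ : Measure X) [IsFiniteMeasure μ] {F : X → ι → ℝ} (hF : Measurable F) {r : ℝ} (hr : 0 < r) :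
    ENNReal.ofReal (Real.exp (-π) ^ Fintype.card ι) *
        (μ.prod μ) {p | ∀ i, |F p.1 i - F p.2 i| ≤ r} ≤
      ENNReal.ofReal (r ^ Fintype.card ι) * ∫⁻ x : ι → ℝ, ENNReal.ofReal
        (‖∫ ξ, Complex.exp (2 * π * Complex.I * (∑ i, x i * F ξ i : ℝ)) ∂μ‖ ^ 2) := by
  set h : (ι → ℝ) → ℂ := fun x => ∫ ξ, Complex.exp (2 * π * Complex.I * (∑ i, x i * F ξ i : ℝ)) ∂μ
    with hh
  set P : Set (X × X) := {p | ∀ i, |F p.1 i - F p.2 i| ≤ r} with hP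
  have hFi : ∀ i, Measurable fun ξ => F ξ i := fun i => (measurable_pi_apply i).comp hF
  have hPm : MeasurableSet P := by
    rw [hP, ofPred_forall]
    refine MeasurableSet.iInter fun i => measurableSet_le ?_ measurable_const
    have h1 : Measurable fun p : X × X => F p.1 i := (hFi i).comp measurable_fst
    have h2 : Measurable fun p : X × X => F p.2 i := (hFi i).comp measurable_snd
    exact (h1.sub h2).norm
  set g : (ι → ℝ) → ℝ := fun x => Real.exp (-∑ i, (π * r ^ 2) * x i ^ 2) with hg
  set K : (ι → ℝ) → X × X → ℂ := fun x p => Complex.exp (-∑ i, ((π * r ^ 2 : ℝ) : ℂ) * (x i : ℂ) ^ 2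
        + ∑ i, (2 * π * Complex.I * (F p.1 i - F p.2 i : ℝ)) * x i) with hK
  have hKg : ∀ x p, ‖K x p‖ = g x := by
    intro x p
    have : (-∑ i, ((π * r ^ 2 : ℝ) : ℂ) * (x i : ℂ) ^ 2
        + ∑ i, (2 * π * Complex.I * (F p.1 i - F p.2 i : ℝ)) * x i)
        = ((-∑ i, (π * r ^ 2) * x i ^ 2 : ℝ) : ℂ)
          + ((∑ i, 2 * π * (F p.1 i - F p.2 i) * x i : ℝ) : ℂ) * Complex.I := by
      push_cast
      rw [Finset.sum_mul]
      congr 1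
      exact Finset.sum_congr rfl fun i _ => by ring
    simp only [hK, hg]
    rw [this, Complex.exp_add, norm_mul, Complex.norm_exp_ofReal_mul_I, mul_one,
      Complex.norm_exp, Complex.ofReal_re]
  have hsq : ∀ x, ((g x * ‖h x‖ ^ 2 : ℝ) : ℂ) = ∫ p, K x p ∂(μ.prod μ) := by
    intro x
    have h1 : ((‖h x‖ ^ 2 : ℝ) : ℂ) = h x * (starRingEnd ℂ) (h x) := by
      rw [Complex.mul_conj, Complex.normSq_eq_norm_sq]
    rw [Complex.ofReal_mul, h1, hh]
    simp only
    rw [← integral_conj, ← integral_prod_mul, ← integral_const_mul]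
    congr 1
    ext p
    simp only [hK, hg, Complex.ofReal_exp, ← Complex.exp_conj, ← Complex.exp_add]
    congr 1
    simp only [map_mul, Complex.conj_ofReal, Complex.conj_I, map_ofNat]
    push_cast
    have e : ∑ i, 2 * (π : ℂ) * Complex.I * (F p.1 i - F p.2 i) * x i
        = 2 * π * Complex.I * ∑ i, x i * F p.1 i + 2 * π * -Complex.I * ∑ i, x i * F p.2 i := by
      push_cast
      rw [Finset.mul_sum, Finset.mul_sum, ← Finset.sum_add_distrib]
      exact Finset.sum_congr rfl fun i _ => by ring
    rw [e]
    push_cast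
    rfl
  have hgint : Integrable g := by
    have := (GaussianFourier.integrable_cexp_neg_sum_mul_add (ι := ι)
      (b := fun _ => ((π * r ^ 2 : ℝ) : ℂ))
      (fun _ => by rw [Complex.ofReal_re]; positivity) 0).norm
    refine this.congr (Filter.Eventually.of_forall fun x => ?_)
    simp only [hg, Pi.zero_apply, zero_mul, Finset.sum_const_zero, add_zero, Complex.norm_exp]
    congr 1
    rw [show (-∑ i, ((π * r ^ 2 : ℝ) : ℂ) * (x i : ℂ) ^ 2) =
      ((-∑ i, (π * r ^ 2) * x i ^ 2 : ℝ) : ℂ) by push_cast; rfl, Complex.ofReal_re]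
  have hKm : Measurable (Function.uncurry K) := by
    have h3 : ∀ i, Measurable fun z : (ι → ℝ) × (X × X) => F z.2.1 i := fun i =>
      (hFi i).comp (measurable_fst.comp measurable_snd)
    have h4 : ∀ i, Measurable fun z : (ι → ℝ) × (X × X) => F z.2.2 i := fun i =>
      (hFi i).comp (measurable_snd.comp measurable_snd)
    have h5 : ∀ i, Measurable fun z : (ι → ℝ) × (X × X) => z.1 i := fun i =>
      (measurable_pi_apply i).comp measurable_fst
    simp only [hK, Function.uncurry_def]
    fun_prop
  have hKint : Integrable (Function.uncurry K) (volume.prod (μ.prod μ)) := by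
    refine Integrable.mono (hgint.mul_prod (integrable_const (1 : ℝ))) hKm.aestronglyMeasurable ?_
    refine Filter.Eventually.of_forall fun z => ?_
    rw [Function.uncurry_def, hKg, mul_one]
    exact le_abs_self _
  have hswap := integral_integral_swap hKint
  simp only [← hsq] at hswap
  set G : X × X → ℝ := fun p => ∏ i, r⁻¹ * Real.exp (-π * ((F p.1 i - F p.2 i) / r) ^ 2) with hG
  have hKG : ∀ p, ∫ x, K x p = (G p : ℂ) := fun p =>
    integral_gaussian_mul_character hr fun i => F p.1 i - F p.2 i
  simp only [hKG, integral_complex_ofReal] at hswap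
  have hswap' : ∫ x, g x * ‖h x‖ ^ 2 = ∫ p, G p ∂(μ.prod μ) := by exact_mod_cast hswap
  have hhm : Integrable fun x => g x * ‖h x‖ ^ 2 := by
    have := hKint.integral_prod_left
    simp only [Function.uncurry_def, ← hsq] at this
    exact this.re
  have hG0 : ∀ p, 0 ≤ G p := fun p => Finset.prod_nonneg fun i _ => by positivity
  have hGint : Integrable G (μ.prod μ) := by
    have := hKint.integral_prod_right
    simp only [Function.uncurry_def, hKG] at this
    exact this.re
  have hlow : ∀ p ∈ P, (r⁻¹ * Real.exp (-π)) ^ Fintype.card ι ≤ G p := by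
    intro p hp
    rw [← Finset.card_univ, ← Finset.prod_const]
    refine Finset.prod_le_prod (fun _ _ => by positivity) fun i _ => ?_
    have h1 : ((F p.1 i - F p.2 i) / r) ^ 2 ≤ 1 := by
      rw [sq_le_one_iff_abs_le_one, abs_div, abs_of_pos hr, div_le_one hr]
      exact hp i
    gcongr
    nlinarith [Real.pi_pos]
  have e1 : ENNReal.ofReal ((r⁻¹ * Real.exp (-π)) ^ Fintype.card ι) * (μ.prod μ) P
      ≤ ∫⁻ x, ENNReal.ofReal (‖h x‖ ^ 2) := by
    calc _ = ∫⁻ p in P, ENNReal.ofReal ((r⁻¹ * Real.exp (-π)) ^ Fintype.card ι) ∂(μ.prod μ) := by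
            rw [setLIntegral_const]
      _ ≤ ∫⁻ p in P, ENNReal.ofReal (G p) ∂(μ.prod μ) :=
            setLIntegral_mono' hPm fun p hp => ENNReal.ofReal_le_ofReal (hlow p hp)
      _ ≤ ∫⁻ p, ENNReal.ofReal (G p) ∂(μ.prod μ) := setLIntegral_le_lintegral _ _
      _ = ∫⁻ x, ENNReal.ofReal (g x * ‖h x‖ ^ 2) := by
            rw [← ofReal_integral_eq_lintegral_ofReal hGint (Filter.Eventually.of_forall hG0),
              ← hswap', ofReal_integral_eq_lintegral_ofReal hhm
                (Filter.Eventually.of_forall fun x => by positivity)]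
      _ ≤ _ := by
            refine lintegral_mono fun x => ENNReal.ofReal_le_ofReal ?_
            refine mul_le_of_le_one_left (by positivity) (Real.exp_le_one_iff.2 ?_)
            exact neg_nonpos.2 (Finset.sum_nonneg fun i _ => by positivity)
  calc _ = ENNReal.ofReal (r ^ Fintype.card ι) *
        (ENNReal.ofReal ((r⁻¹ * Real.exp (-π)) ^ Fintype.card ι) * (μ.prod μ) P) := by
          rw [← mul_assoc, ← ENNReal.ofReal_mul (by positivity), ← mul_pow,
            mul_inv_cancel_left₀ hr.ne']
    _ ≤ _ := by gcongr

/-- Cauchy–Schwarz against an indicator function. -/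
theorem sq_lintegral_le_measure_mul {Y : Type*} [MeasurableSpace Y] {m : Measure Y}
    {f : Y → ℝ≥0∞} (hf : AEMeasurable f m) {B : Set Y} (hB : MeasurableSet B)
    (hfB : ∀ y ∉ B, f y = 0) :
    (∫⁻ y, f y ∂m) ^ 2 ≤ m B * ∫⁻ y, f y ^ 2 ∂m := by
  have h := ENNReal.lintegral_mul_le_Lp_mul_Lq m Real.HolderConjugate.two_two hf
    ((measurable_one (α := ℝ≥0∞)).indicator hB).aemeasurable
  have h1 : ∀ y, (f * B.indicator (1 : Y → ℝ≥0∞)) y = f y := by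
    intro y
    by_cases hy : y ∈ B <;> simp [hy, hfB]
  have h2 : ∀ y, (B.indicator (1 : Y → ℝ≥0∞) y) ^ (2 : ℝ) = B.indicator 1 y := by
    intro y
    by_cases hy : y ∈ B <;> simp [hy]
  simp only [h1, h2, lintegral_indicator_one hB, ENNReal.rpow_two] at h
  refine (pow_le_pow_left₀ zero_le h 2).trans_eq ?_
  rw [mul_pow, ← ENNReal.rpow_two, ← ENNReal.rpow_two, ← ENNReal.rpow_mul, ← ENNReal.rpow_mul]
  norm_num [mul_comm]

/-- A set of points whose images lie in a small set contains many pairs with close images. -/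
theorem sq_measure_le_measure_close_pairs {X ι : Type*} [MeasurableSpace X] [Fintype ι]
    (μ : Measure X) [IsFiniteMeasure μ] {F : X → ι → ℝ} (hF : Measurable F) {ρ : ℝ} (hρ : 0 < ρ)
    {S : Set X} (hS : MeasurableSet S) {B : Set (ι → ℝ)} (hSB : ∀ ξ ∈ S, F ξ ∈ B) :
    ENNReal.ofReal ((2 * ρ) ^ Fintype.card ι) * μ S ^ 2 ≤
      volume (Metric.cthickening ρ B) *
        (μ.prod μ) ({p | ∀ i, |F p.1 i - F p.2 i| ≤ 2 * ρ} ∩ S ×ˢ S) := by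
  set R := ENNReal.ofReal ((2 * ρ) ^ Fintype.card ι) with hR
  have hR0 : R ≠ 0 := by rw [hR]; simp only [ne_eq, ENNReal.ofReal_eq_zero, not_le]; positivity
  have hRt : R ≠ ⊤ := ENNReal.ofReal_ne_top
  set P : Set (X × X) := {p | ∀ i, |F p.1 i - F p.2 i| ≤ 2 * ρ} with hP
  have hball : ∀ z : ι → ℝ, volume (Metric.closedBall z ρ) = R := fun z =>
    Real.volume_pi_closedBall z hρ.le
  set T : Set (X × (ι → ℝ)) := {z | z.1 ∈ S ∧ dist z.2 (F z.1) ≤ ρ} with hT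
  have hTm : MeasurableSet T :=
    (measurable_fst hS).inter (measurableSet_le
      (measurable_snd.dist (hF.comp measurable_fst)) measurable_const)
  set t : X → (ι → ℝ) → ℝ≥0∞ := fun ξ y => T.indicator 1 (ξ, y) with ht
  have htm : Measurable (Function.uncurry t) := (measurable_one (α := ℝ≥0∞)).indicator hTm
  have htval : ∀ ξ y, t ξ y = S.indicator 1 ξ * (Metric.closedBall (F ξ) ρ).indicator 1 y := by
    intro ξ y
    by_cases h1 : ξ ∈ S <;> by_cases h2 : dist y (F ξ) ≤ ρ <;> simp [ht, hT, h1, h2]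
  set f : (ι → ℝ) → ℝ≥0∞ := fun y => ∫⁻ ξ, t ξ y ∂μ with hf
  have hfm : Measurable f := htm.lintegral_prod_left
  have hfint : ∫⁻ y, f y = R * μ S := by
    rw [hf, lintegral_lintegral_swap (f := fun y ξ => t ξ y) (htm.comp measurable_swap).aemeasurable]
    have : ∀ ξ, ∫⁻ y, t ξ y = R * S.indicator 1 ξ := by
      intro ξ
      simp only [htval]
      rw [lintegral_const_mul _ ((measurable_one (α := ℝ≥0∞)).indicator
        Metric.isClosed_closedBall.measurableSet),
        lintegral_indicator_one Metric.isClosed_closedBall.measurableSet, hball, mul_comm]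
    simp only [this]
    rw [lintegral_const_mul _ ((measurable_one (α := ℝ≥0∞)).indicator hS), lintegral_indicator_one hS]
  have hsupp : ∀ y ∉ Metric.cthickening ρ B, f y = 0 := by
    intro y hy
    rw [hf]
    refine (lintegral_congr fun ξ => ?_).trans lintegral_zero
    simp only [ht, Set.indicator_apply_eq_zero]
    rintro ⟨h1, h2⟩
    exact absurd (Metric.mem_cthickening_of_dist_le y (F ξ) ρ B (hSB ξ h1) h2) hy
  have hsq : ∫⁻ y, f y ^ 2 ≤ R * (μ.prod μ) (P ∩ S ×ˢ S) := by
    have h1 : ∀ y, f y ^ 2 = ∫⁻ p, t p.1 y * t p.2 y ∂(μ.prod μ) := by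
      intro y
      have hty : Measurable fun ξ => t ξ y := htm.comp measurable_prodMk_right
      rw [lintegral_prod_mul hty.aemeasurable hty.aemeasurable, sq]
    simp only [h1]
    have hm : Measurable fun z : (ι → ℝ) × (X × X) => t z.2.1 z.1 * t z.2.2 z.1 :=
      (htm.comp ((measurable_fst.comp measurable_snd).prodMk measurable_fst)).mul
        (htm.comp ((measurable_snd.comp measurable_snd).prodMk measurable_fst))
    rw [lintegral_lintegral_swap (f := fun y (p : X × X) => t p.1 y * t p.2 y) hm.aemeasurable]
    calc _ ≤ ∫⁻ p, (P ∩ S ×ˢ S).indicator (fun _ => R) p ∂(μ.prod μ) := by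
          refine lintegral_mono fun p => ?_
          by_cases hp : p ∈ P ∩ S ×ˢ S
          · rw [Set.indicator_of_mem hp, ← hball (F p.1),
              ← lintegral_indicator_one Metric.isClosed_closedBall.measurableSet]
            refine lintegral_mono fun y => ?_
            rw [htval, htval]
            by_cases h : y ∈ Metric.closedBall (F p.1) ρ
            · rw [Set.indicator_of_mem h]
              refine mul_le_one' (mul_le_one' ?_ le_rfl) (mul_le_one' ?_ ?_) <;>
              exact Set.indicator_apply_le' (fun _ => le_rfl) fun _ => zero_le_one
            · simp [Set.indicator_of_notMem h]
          · rw [Set.indicator_of_notMem hp]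
            refine le_of_eq ((lintegral_congr fun y => ?_).trans lintegral_zero)
            by_contra hne
            obtain ⟨h1, h2⟩ := mul_ne_zero_iff.1 hne
            have h1' : (p.1, y) ∈ T := by
              by_contra h; exact h1 (Set.indicator_of_notMem h _)
            have h2' : (p.2, y) ∈ T := by
              by_contra h; exact h2 (Set.indicator_of_notMem h _)
            refine hp ⟨fun i => ?_, h1'.1, h2'.1⟩
            have hd : dist (F p.1) (F p.2) ≤ 2 * ρ := by
              have := dist_triangle_left (F p.1) (F p.2) y
              linarith [h1'.2, h2'.2]
            rw [← Real.dist_eq]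
            exact (dist_le_pi_dist _ _ i).trans hd
      _ ≤ _ := by
          exact lintegral_indicator_const_le _ _
  have hcs := sq_lintegral_le_measure_mul (m := volume) hfm.aemeasurable
    (B := Metric.cthickening ρ B) Metric.isClosed_cthickening.measurableSet hsupp
  rw [hfint] at hcs
  have h2 : R * (R * μ S ^ 2) ≤ R * (volume (Metric.cthickening ρ B) * (μ.prod μ) (P ∩ S ×ˢ S)) := by
    calc _ = (R * μ S) ^ 2 := by ring
      _ ≤ _ := hcs
      _ ≤ volume (Metric.cthickening ρ B) * (R * (μ.prod μ) (P ∩ S ×ˢ S)) := by gcongr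
      _ = _ := by ring
  exact (ENNReal.mul_le_mul_iff_right hR0 hRt).1 h2

/-- Lower bound for the second moment of a characteristic function from a disjoint family of
sets with small images. -/
theorem sum_sq_measure_div_le_lintegral_sq {X ι κ : Type*} [MeasurableSpace X] [Fintype ι]
    (μ : Measure X) [IsFiniteMeasure μ] {F : X → ι → ℝ} (hF : Measurable F) (T : Finset κ)
    {S : κ → Set X} (hS : ∀ m, MeasurableSet (S m)) (hd : (T : Set κ).PairwiseDisjoint S)
    {B : κ → Set (ι → ℝ)} (hB : ∀ m, IsCompact (B m)) (hSB : ∀ m, ∀ ξ ∈ S m, F ξ ∈ B m)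
    {b : κ → ℝ≥0∞} (hb : ∀ m, volume (B m) < b m) :
    ENNReal.ofReal (Real.exp (-π) ^ Fintype.card ι) * ∑ m ∈ T, μ (S m) ^ 2 / b m ≤
      ∫⁻ x : ι → ℝ, ENNReal.ofReal
        (‖∫ ξ, Complex.exp (2 * π * Complex.I * (∑ i, x i * F ξ i : ℝ)) ∂μ‖ ^ 2) := by
  obtain ⟨ρ, hρ, hρB⟩ : ∃ ρ : ℝ, 0 < ρ ∧ ∀ m ∈ T, volume (Metric.cthickening ρ (B m)) < b m := by
    have h1 : ∀ᶠ ρ in nhdsWithin (0 : ℝ) (Ioi 0),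
        ∀ m ∈ T, volume (Metric.cthickening ρ (B m)) < b m := by
      rw [Filter.eventually_all_finset]
      intro m _
      exact nhdsWithin_le_nhds
        ((tendsto_measure_cthickening_of_isCompact (hB m)).eventually_lt_const (hb m))
    obtain ⟨ρ, h2, h3⟩ := (h1.and self_mem_nhdsWithin).exists
    exact ⟨ρ, h3, h2⟩
  set R := ENNReal.ofReal ((2 * ρ) ^ Fintype.card ι) with hR
  have hR0 : R ≠ 0 := by rw [hR]; simp only [ne_eq, ENNReal.ofReal_eq_zero, not_le]; positivity
  have hRt : R ≠ ⊤ := ENNReal.ofReal_ne_top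
  set P : Set (X × X) := {p | ∀ i, |F p.1 i - F p.2 i| ≤ 2 * ρ} with hP
  have hPm : MeasurableSet P := by
    rw [hP, ofPred_forall]
    refine MeasurableSet.iInter fun i => measurableSet_le ?_ measurable_const
    have h1 : Measurable fun p : X × X => F p.1 i :=
      (measurable_pi_apply i).comp (hF.comp measurable_fst)
    have h2 : Measurable fun p : X × X => F p.2 i :=
      (measurable_pi_apply i).comp (hF.comp measurable_snd)
    exact (h1.sub h2).norm
  have hterm : ∀ m ∈ T, R * (μ (S m) ^ 2 / b m) ≤ (μ.prod μ) (P ∩ S m ×ˢ S m) := by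
    intro m hm
    rw [← mul_div_assoc]
    refine ENNReal.div_le_of_le_mul' ?_
    refine (sq_measure_le_measure_close_pairs μ hF hρ (hS m) (hSB m)).trans ?_
    gcongr
    exact (hρB m hm).le
  have hsum : R * ∑ m ∈ T, μ (S m) ^ 2 / b m ≤ (μ.prod μ) P := by
    rw [Finset.mul_sum]
    refine (Finset.sum_le_sum hterm).trans ?_
    rw [← measure_biUnion_finset ?_ fun m _ => hPm.inter ((hS m).prod (hS m))]
    · exact measure_mono (iUnion₂_subset fun m _ => inter_subset_left)
    · intro m hm m' hm' hne
      refine Set.disjoint_left.2 fun p hp hp' => ?_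
      exact Set.disjoint_left.1 (hd hm hm' hne) hp.2.1 hp'.2.1
  have hmain := measure_close_pairs_le_lintegral_sq μ hF (r := 2 * ρ) (by positivity)
  refine (ENNReal.mul_le_mul_iff_right hR0 hRt).1 ?_
  calc _ = ENNReal.ofReal (Real.exp (-π) ^ Fintype.card ι) *
        (R * ∑ m ∈ T, μ (S m) ^ 2 / b m) := by ring
    _ ≤ _ := (mul_le_mul_right hsum _).trans hmain

/-- The moment vector `φ_k` in coordinates `(u, v)`. -/
def momentVec (k : ℕ) (u v : ℝ) : Idx k → ℝ := fun β => u ^ (β.1.1 : ℕ) * v ^ (β.1.2 : ℕ)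

/-- Splitting off the constant monomial from a sum over monomials of degree at most `k`. -/
theorem sum_prod_fin_eq_sum_idx (k : ℕ) (g : Fin (k + 1) × Fin (k + 1) → ℝ)
    (hg : ∀ β, k < (β.1 : ℕ) + (β.2 : ℕ) → g β = 0) :
    ∑ β, g β = ∑ β : Idx k, g β.1 + g (0, 0) := by
  rw [← Fintype.sum_subtype_add_sum_subtype
    (fun β : Fin (k + 1) × Fin (k + 1) => 1 ≤ (β.1 : ℕ) + (β.2 : ℕ) ∧ (β.1 : ℕ) + (β.2 : ℕ) ≤ k) g]
  congr 1
  refine Fintype.sum_eq_single (⟨(0, 0), by simp⟩ : {β : Fin (k + 1) × Fin (k + 1) //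
    ¬ (1 ≤ (β.1 : ℕ) + (β.2 : ℕ) ∧ (β.1 : ℕ) + (β.2 : ℕ) ≤ k)}) ?_
  rintro ⟨⟨i, l⟩, h⟩ hne
  refine hg _ ?_
  by_contra hle
  refine hne ?_
  simp only [Subtype.mk.injEq, Prod.mk.injEq, Fin.ext_iff, Fin.val_zero]
  simp only at h hle
  omega

open Polynomial in
/-- The coefficient of `w ^ i * v ^ l` in `(w + (α + γ * v)) ^ m * v ^ n`. -/
def shearCoeff (α γ : ℝ) (m n i l : ℕ) : ℝ :=
  (m.choose i : ℝ) * ((C α + C γ * X) ^ (m - i) * X ^ n : ℝ[X]).coeff l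

open Polynomial in
theorem natDegree_shear_le (α γ : ℝ) (m n : ℕ) :
    ((C α + C γ * X) ^ m * X ^ n : ℝ[X]).natDegree ≤ m + n := by
  refine natDegree_mul_le.trans (add_le_add ?_ (natDegree_X_pow_le n))
  refine natDegree_pow_le.trans ?_
  refine (Nat.mul_le_mul_left m (?_ : _ ≤ 1)).trans (mul_one m).le
  refine (natDegree_add_le _ _).trans ?_
  simp only [natDegree_C, zero_le, sup_of_le_right]
  exact (natDegree_C_mul_le γ X).trans natDegree_X_le

theorem shearCoeff_of_lt (α γ : ℝ) {m n i l : ℕ} (h : m < i) : shearCoeff α γ m n i l = 0 := by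
  simp [shearCoeff, Nat.choose_eq_zero_of_lt h]

theorem shearCoeff_of_degree_lt (α γ : ℝ) {m n i l : ℕ} (h : m + n < i + l) :
    shearCoeff α γ m n i l = 0 := by
  rcases lt_or_ge m i with hi | hi
  · exact shearCoeff_of_lt α γ hi
  · rw [shearCoeff, Polynomial.coeff_eq_zero_of_natDegree_lt, mul_zero]
    exact (natDegree_shear_le α γ (m - i) n).trans_lt (by omega)

theorem shearCoeff_self (α γ : ℝ) (m n l : ℕ) :
    shearCoeff α γ m n m l = if l = n then 1 else 0 := by
  simp [shearCoeff, Polynomial.coeff_X_pow]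

theorem pow_mul_pow_eq_sum_shearCoeff (α γ : ℝ) {k m n : ℕ} (h : m + n ≤ k) (w v : ℝ) :
    (w + (α + γ * v)) ^ m * v ^ n =
      ∑ β : Fin (k + 1) × Fin (k + 1), shearCoeff α γ m n β.1 β.2 * (w ^ (β.1 : ℕ) * v ^ (β.2 : ℕ)) := by
  rw [Fintype.sum_prod_type]
  simp only
  rw [Fin.sum_univ_eq_sum_range (fun i => ∑ l : Fin (k + 1),
    shearCoeff α γ m n i l * (w ^ i * v ^ (l : ℕ))) (k + 1)]
  rw [← Finset.sum_subset (Finset.range_subset_range.2 (show m + 1 ≤ k + 1 by omega))]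
  · rw [add_pow, Finset.sum_mul]
    refine Finset.sum_congr rfl fun i hi => ?_
    rw [Finset.mem_range] at hi
    rw [Fin.sum_univ_eq_sum_range (fun l => shearCoeff α γ m n i l * (w ^ i * v ^ l)) (k + 1)]
    have hp := Polynomial.eval_eq_sum_range' (n := k + 1)
      ((natDegree_shear_le α γ (m - i) n).trans_lt (by omega)) v
    simp only [Polynomial.eval_mul, Polynomial.eval_pow, Polynomial.eval_add, Polynomial.eval_C,
      Polynomial.eval_X] at hp
    calc _ = w ^ i * (m.choose i) * ((α + γ * v) ^ (m - i) * v ^ n) := by ring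
      _ = _ := by
        rw [hp, Finset.mul_sum]
        exact Finset.sum_congr rfl fun l _ => by rw [shearCoeff]; ring
  · intro i _ hi
    rw [Finset.mem_range] at hi
    exact Finset.sum_eq_zero fun l _ => by rw [shearCoeff_of_lt α γ (by omega), zero_mul]

/-- Shearing the plane acts on moment vectors by a unimodular affine map. -/
theorem exists_momentVec_shear (k : ℕ) (α γ : ℝ) :
    ∃ (L : (Idx k → ℝ) →ₗ[ℝ] (Idx k → ℝ)) (c : Idx k → ℝ), LinearMap.det L = 1 ∧
      ∀ w v, momentVec k (w + (α + γ * v)) v = L (momentVec k w v) + c := by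
  classical
  let M : Matrix (Idx k) (Idx k) ℝ := fun β β' => shearCoeff α γ β.1.1 β.1.2 β'.1.1 β'.1.2
  refine ⟨Matrix.toLin' M, fun β => shearCoeff α γ β.1.1 β.1.2 0 0, ?_, ?_⟩
  · rw [LinearMap.det_toLin']
    have hM : M.BlockTriangular fun β => OrderDual.toDual (β.1.1 : ℕ) := fun β β' h =>
      shearCoeff_of_lt α γ (OrderDual.toDual_lt_toDual.1 h)
    rw [hM.det]
    refine Finset.prod_eq_one fun a _ => ?_
    have : M.toSquareBlock (fun β => OrderDual.toDual (β.1.1 : ℕ)) a = 1 := by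
      ext ⟨β, hβ⟩ ⟨β', hβ'⟩
      have he : (β'.1.1 : ℕ) = β.1.1 := OrderDual.toDual.injective (hβ'.trans hβ.symm)
      change shearCoeff α γ β.1.1 β.1.2 β'.1.1 β'.1.2 = _
      rw [he, shearCoeff_self, Matrix.one_apply]
      simp only [Subtype.mk.injEq]
      refine if_congr ⟨fun h => ?_, fun h => by rw [h]⟩ rfl rfl
      exact Subtype.ext (Prod.ext (Fin.ext he.symm) (Fin.ext h.symm))
    rw [this, Matrix.det_one]
  · intro w v
    ext β
    have hk := β.2.2
    rw [momentVec, pow_mul_pow_eq_sum_shearCoeff α γ hk, sum_prod_fin_eq_sum_idx]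
    · simp only [Fin.val_zero, pow_zero, mul_one]
      rfl
    · intro β' h
      rw [shearCoeff_of_degree_lt α γ (hk.trans_lt h), zero_mul]

/-- The total degree in the first variable of all monomials of degree between `1` and `k`. -/
theorem six_mul_sum_fst_idx (k : ℕ) :
    6 * ∑ β : Idx k, (β.1.1 : ℕ) = k * (k + 1) * (k + 2) := by
  have h1 := sum_prod_fin_eq_sum_idx k
    (fun β => if (β.1 : ℕ) + (β.2 : ℕ) ≤ k then ((β.1 : ℕ) : ℝ) else 0)
    (fun β h => if_neg (not_le.2 h))
  have h2 : ∑ β : Idx k, (if (β.1.1 : ℕ) + (β.1.2 : ℕ) ≤ k then ((β.1.1 : ℕ) : ℝ) else 0)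
      = ((∑ β : Idx k, (β.1.1 : ℕ) : ℕ) : ℝ) := by
    rw [Nat.cast_sum]
    exact Finset.sum_congr rfl fun β _ => if_pos β.2.2
  have h3 : ∑ β : Fin (k + 1) × Fin (k + 1),
      (if (β.1 : ℕ) + (β.2 : ℕ) ≤ k then ((β.1 : ℕ) : ℝ) else 0)
      = ∑ i ∈ Finset.range (k + 1), (i : ℝ) * (k + 1 - i) := by
    rw [Fintype.sum_prod_type, ← Fin.sum_univ_eq_sum_range (fun i => (i : ℝ) * (k + 1 - i)) (k + 1)]
    refine Finset.sum_congr rfl fun i _ => ?_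
    have hi : (i : ℕ) ≤ k := Nat.lt_succ_iff.1 i.2
    simp only
    rw [Fin.sum_univ_eq_sum_range (fun l => if (i : ℕ) + l ≤ k then ((i : ℕ) : ℝ) else 0) (k + 1),
      ← Finset.sum_filter, Finset.sum_const, nsmul_eq_mul, mul_comm]
    have : (Finset.range (k + 1)).filter (fun l => (i : ℕ) + l ≤ k) = Finset.range (k + 1 - i) := by
      ext l; simp only [Finset.mem_filter, Finset.mem_range]; omega
    rw [this, Finset.card_range, Nat.cast_sub (by omega)]
    push_cast; rfl
  have h4 : ∀ n : ℕ, ∀ x : ℝ, 6 * ∑ i ∈ Finset.range (n + 1), (i : ℝ) * (x - i)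
      = n * (n + 1) * (3 * x - (2 * n + 1)) := by
    intro n x
    induction n with
    | zero => simp
    | succ n ih => rw [Finset.sum_range_succ, mul_add, ih]; push_cast; ring
  have h5 := h4 k (k + 1)
  rw [← h3, h1, h2] at h5
  simp only [Fin.val_zero, add_zero, zero_le, if_true, Nat.cast_zero] at h5
  have h6 : ((6 * ∑ β : Idx k, (β.1.1 : ℕ) : ℕ) : ℝ) = ((k * (k + 1) * (k + 2) : ℕ) : ℝ) := by
    push_cast at h5 ⊢
    linarith
  exact_mod_cast h6

/-- The parallelogram of height `1 / 4` and width `δ / 8` along the line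
`ξ₀ = α + γ ξ₁`, displaced from it by `δ * b`. -/
def strip (δ α γ a b : ℝ) : Set (Fin 2 → ℝ) :=
  {ξ | (a ≤ ξ 1 ∧ ξ 1 ≤ a + 1 / 4) ∧
    δ * b ≤ ξ 0 - (α + γ * ξ 1) ∧ ξ 0 - (α + γ * ξ 1) ≤ δ * (b + 1 / 8)}

theorem measurableSet_strip (δ α γ a b : ℝ) : MeasurableSet (strip δ α γ a b) := by
  have h1 : Measurable fun ξ : Fin 2 → ℝ => ξ 1 := measurable_pi_apply 1
  have h2 : Measurable fun ξ : Fin 2 → ℝ => ξ 0 - (α + γ * ξ 1) := by fun_prop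
  exact ((measurableSet_le measurable_const h1).inter (measurableSet_le h1 measurable_const)).inter
    ((measurableSet_le measurable_const h2).inter (measurableSet_le h2 measurable_const))

theorem volume_strip {δ : ℝ} (hδ : 0 < δ) (α γ a b : ℝ) :
    volume (strip δ α γ a b) = ENNReal.ofReal (δ / 32) := by
  set f : (Fin 2 → ℝ) →ₗ[ℝ] (Fin 2 → ℝ) := Matrix.toLin' !![1, -γ; 0, 1] with hf
  have hdet : LinearMap.det f = 1 := by
    rw [hf, LinearMap.det_toLin', Matrix.det_fin_two_of]; ring
  have h0 : ∀ ξ, f ξ 0 = ξ 0 - γ * ξ 1 := fun ξ => by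
    simp [hf, Matrix.mulVec, dotProduct, Fin.sum_univ_two]; ring
  have h1 : ∀ ξ, f ξ 1 = ξ 1 := fun ξ => by
    simp [hf, Matrix.mulVec, dotProduct, Fin.sum_univ_two]
  have hpre : strip δ α γ a b =
      f ⁻¹' Icc ![α + δ * b, a] ![α + δ * (b + 1 / 8), a + 1 / 4] := by
    ext ξ
    simp only [strip, mem_ofPred_eq, mem_preimage, mem_Icc, Pi.le_def, Fin.forall_fin_two, h0, h1,
      Matrix.cons_val_zero, Matrix.cons_val_one]
    constructor
    · rintro ⟨⟨h1, h2⟩, h3, h4⟩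
      exact ⟨⟨by linarith, h1⟩, by linarith, h2⟩
    · rintro ⟨⟨h1, h2⟩, h3, h4⟩
      exact ⟨⟨h2, h4⟩, by linarith, by linarith⟩
  rw [hpre, Measure.addHaar_preimage_linearMap volume (by rw [hdet]; exact one_ne_zero), hdet,
    Real.volume_Icc_pi, Fin.prod_univ_two]
  simp only [inv_one, abs_one, ENNReal.ofReal_one, one_mul, Matrix.cons_val_zero,
    Matrix.cons_val_one]
  rw [← ENNReal.ofReal_mul (by linarith)]
  congr 1
  ring

/-- The tuples whose `0`-th and `1`-st entries are spread along the line `ξ₀ = α + γ ξ₁`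
while all later entries have distance about `δ` from it. -/
def stripTuples (s : ℕ) (δ α γ : ℝ) : Set (Fin s → Fin 2 → ℝ) :=
  Set.pi univ fun i => strip δ α γ (if (i : ℕ) = 1 then 3 / 4 else 0) (if (i : ℕ) ≤ 1 then 0 else 1)

theorem measurableSet_stripTuples (s : ℕ) (δ α γ : ℝ) : MeasurableSet (stripTuples s δ α γ) :=
  MeasurableSet.univ_pi fun _ => measurableSet_strip _ _ _ _ _

theorem measure_stripTuples (s : ℕ) {δ α γ : ℝ} (hδ : 0 < δ) (hδ' : δ ≤ 1 / 8) (hα : 0 ≤ α)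
    (hγ : 0 ≤ γ) (hαγ : α + γ ≤ 1 / 2) :
    Measure.pi (fun _ : Fin s => (volume : Measure (Fin 2 → ℝ)).restrict (Icc 0 1))
      (stripTuples s δ α γ) = ENNReal.ofReal (δ / 32) ^ s := by
  rw [stripTuples, Measure.pi_pi]
  have : ∀ i : Fin s, ((volume : Measure (Fin 2 → ℝ)).restrict (Icc 0 1))
      (strip δ α γ (if (i : ℕ) = 1 then 3 / 4 else 0) (if (i : ℕ) ≤ 1 then 0 else 1))
      = ENNReal.ofReal (δ / 32) := by
    intro i
    have hv : ∀ c : Prop, [Decidable c] → 0 ≤ (if c then 3 / 4 else 0 : ℝ) ∧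
        (if c then 3 / 4 else 0 : ℝ) ≤ 3 / 4 := by
      intro c _; split_ifs <;> norm_num
    have hw : ∀ c : Prop, [Decidable c] → 0 ≤ (if c then 0 else 1 : ℝ) ∧
        (if c then 0 else 1 : ℝ) ≤ 1 := by
      intro c _; split_ifs <;> norm_num
    obtain ⟨hv0, hv1⟩ := hv ((i : ℕ) = 1)
    obtain ⟨hw0, hw1⟩ := hw ((i : ℕ) ≤ 1)
    rw [Measure.restrict_apply (measurableSet_strip _ _ _ _ _), inter_eq_self_of_subset_left,
      volume_strip hδ]
    rintro ξ ⟨⟨h1, h2⟩, h3, h4⟩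
    have h5 : 0 ≤ ξ 1 := hv0.trans h1
    have h6 : ξ 1 ≤ 1 := by linarith
    have h7 := mul_nonneg hδ.le hw0
    have h8 := mul_le_mul_of_nonneg_left hw1 hδ.le
    have h9 := mul_nonneg hγ h5
    have h10 := mul_le_mul_of_nonneg_left h6 hγ
    simp only [mem_Icc, Pi.le_def, Fin.forall_fin_two, Pi.zero_apply, Pi.one_apply]
    exact ⟨⟨by linarith, h5⟩, by linarith, h6⟩
  simp only [this, Finset.prod_const, Finset.card_univ, Fintype.card_fin]

/-- The sum of the moment vectors of a tuple of points. -/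
def momentSum (k s : ℕ) (ξ : Fin s → Fin 2 → ℝ) : Idx k → ℝ :=
  ∑ i, momentVec k (ξ i 0) (ξ i 1)

theorem measurable_momentSum (k s : ℕ) : Measurable (momentSum k s) := by
  refine measurable_pi_lambda _ fun β => ?_
  simp only [momentSum, Finset.sum_apply, momentVec]
  fun_prop

theorem exists_isCompact_momentSum_mem (k s : ℕ) {δ : ℝ} (hδ : 0 < δ) (α γ : ℝ) :
    ∃ B : Set (Idx k → ℝ), IsCompact B ∧
      volume B = ENNReal.ofReal
        ((s : ℝ) ^ Fintype.card (Idx k) * (2 * δ) ^ ∑ β : Idx k, (β.1.1 : ℕ)) ∧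
      ∀ ξ ∈ stripTuples s δ α γ, momentSum k s ξ ∈ B := by
  obtain ⟨L, c, hL, hLc⟩ := exists_momentVec_shear k α γ
  set A : Set (Idx k → ℝ) := Icc 0 fun β => s * (2 * δ) ^ (β.1.1 : ℕ) with hA
  refine ⟨(fun y => y + (s : ℝ) • c) '' (L '' A), ?_, ?_, ?_⟩
  · exact (isCompact_Icc.image L.continuous_of_finiteDimensional).image (by fun_prop)
  · rw [image_add_right, measure_preimage_add_right, Measure.addHaar_image_linearMap, hL, hA,
      Real.volume_Icc_pi]
    simp only [abs_one, ENNReal.ofReal_one, one_mul, Pi.zero_apply, sub_zero]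
    rw [← ENNReal.ofReal_prod_of_nonneg fun _ _ => by positivity, Finset.prod_mul_distrib,
      Finset.prod_pow_eq_pow_sum, Finset.prod_const, Finset.card_univ]
  · intro ξ hξ
    refine ⟨L (∑ i, momentVec k (ξ i 0 - (α + γ * ξ i 1)) (ξ i 1)), ⟨_, ?_, rfl⟩, ?_⟩
    · have hb : ∀ i, ∀ β : Idx k,
          0 ≤ momentVec k (ξ i 0 - (α + γ * ξ i 1)) (ξ i 1) β ∧
          momentVec k (ξ i 0 - (α + γ * ξ i 1)) (ξ i 1) β ≤ (2 * δ) ^ (β.1.1 : ℕ) := by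
        intro i β
        obtain ⟨⟨h1, h2⟩, h3, h4⟩ := hξ i (mem_univ i)
        have hw0 : 0 ≤ ξ i 0 - (α + γ * ξ i 1) := by
          refine le_trans ?_ h3
          split_ifs <;> simp [hδ.le]
        have hw1 : ξ i 0 - (α + γ * ξ i 1) ≤ 2 * δ := by
          refine h4.trans ?_
          split_ifs <;> linarith
        have hv0 : 0 ≤ ξ i 1 := by
          refine le_trans ?_ h1
          split_ifs <;> norm_num
        have hv1 : ξ i 1 ≤ 1 := by
          refine h2.trans ?_
          split_ifs <;> norm_num
        refine ⟨by rw [momentVec]; positivity, ?_⟩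
        rw [momentVec]
        calc _ ≤ (2 * δ) ^ (β.1.1 : ℕ) * 1 :=
              mul_le_mul (pow_le_pow_left₀ hw0 hw1 _) (pow_le_one₀ hv0 hv1) (by positivity)
                (by positivity)
          _ = _ := mul_one _
      refine ⟨fun β => ?_, fun β => ?_⟩
      · rw [Finset.sum_apply]
        exact Finset.sum_nonneg fun i _ => (hb i β).1
      · rw [Finset.sum_apply]
        refine (Finset.sum_le_sum fun i _ => (hb i β).2).trans_eq ?_
        simp
    · simp only [momentSum, map_sum]
      have : ∀ i, momentVec k (ξ i 0) (ξ i 1) =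
          L (momentVec k (ξ i 0 - (α + γ * ξ i 1)) (ξ i 1)) + c := by
        intro i
        rw [← hLc, sub_add_cancel]
      simp only [this, Finset.sum_add_distrib, Finset.sum_const, Finset.card_univ,
        Fintype.card_fin, Nat.cast_smul_eq_nsmul]

/-- The determinant of the first three points of a tuple determines the scale. -/
theorem det_mem_of_mem_stripTuples {s : ℕ} (hs : 3 ≤ s) {δ α γ : ℝ} (hδ : 0 < δ)
    {ξ : Fin s → Fin 2 → ℝ} (hξ : ξ ∈ stripTuples s δ α γ) {p₀ p₁ p₂ : Fin 2 → ℝ}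
    (h₀ : ξ ⟨0, by omega⟩ = p₀) (h₁ : ξ ⟨1, by omega⟩ = p₁) (h₂ : ξ ⟨2, by omega⟩ = p₂) :
    δ / 4 ≤ p₀ 0 * (p₂ 1 - p₁ 1) + p₁ 0 * (p₀ 1 - p₂ 1) + p₂ 0 * (p₁ 1 - p₀ 1) ∧
    p₀ 0 * (p₂ 1 - p₁ 1) + p₁ 0 * (p₀ 1 - p₂ 1) + p₂ 0 * (p₁ 1 - p₀ 1) ≤ 3 / 2 * δ := by
  obtain ⟨⟨a1, a2⟩, a3, a4⟩ := hξ ⟨0, by omega⟩ (mem_univ _)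
  obtain ⟨⟨b1, b2⟩, b3, b4⟩ := hξ ⟨1, by omega⟩ (mem_univ _)
  obtain ⟨⟨c1, c2⟩, c3, c4⟩ := hξ ⟨2, by omega⟩ (mem_univ _)
  rw [h₀] at a1 a2 a3 a4
  rw [h₁] at b1 b2 b3 b4
  rw [h₂] at c1 c2 c3 c4
  norm_num at a1 a2 a3 a4 b1 b2 b3 b4 c1 c2 c3 c4
  obtain ⟨w₀, hw₀⟩ : ∃ w, w = p₀ 0 - (α + γ * p₀ 1) := ⟨_, rfl⟩
  obtain ⟨w₁, hw₁⟩ : ∃ w, w = p₁ 0 - (α + γ * p₁ 1) := ⟨_, rfl⟩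
  obtain ⟨w₂, hw₂⟩ : ∃ w, w = p₂ 0 - (α + γ * p₂ 1) := ⟨_, rfl⟩
  have e : p₀ 0 * (p₂ 1 - p₁ 1) + p₁ 0 * (p₀ 1 - p₂ 1) + p₂ 0 * (p₁ 1 - p₀ 1) =
      w₂ * (p₁ 1 - p₀ 1) - w₀ * (p₁ 1 - p₂ 1) - w₁ * (p₂ 1 - p₀ 1) := by
    rw [hw₀, hw₁, hw₂]; ring
  have A : 0 ≤ w₀ ∧ w₀ ≤ δ / 8 := ⟨by linarith, by linarith⟩
  have B : 0 ≤ w₁ ∧ w₁ ≤ δ / 8 := ⟨by linarith, by linarith⟩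
  have C : δ ≤ w₂ ∧ w₂ ≤ 9 / 8 * δ := ⟨by linarith, by linarith⟩
  have m1 : δ * (1 / 2) ≤ w₂ * (p₁ 1 - p₀ 1) :=
    mul_le_mul C.1 (by linarith) (by norm_num) (by linarith)
  have m1' : w₂ * (p₁ 1 - p₀ 1) ≤ 9 / 8 * δ * 1 :=
    mul_le_mul C.2 (by linarith) (by linarith) (by linarith)
  have m2 : 0 ≤ w₀ * (p₁ 1 - p₂ 1) := mul_nonneg A.1 (by linarith)
  have m2' : w₀ * (p₁ 1 - p₂ 1) ≤ δ / 8 * 1 :=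
    mul_le_mul A.2 (by linarith) (by linarith) (by linarith)
  have m3 : |w₁ * (p₂ 1 - p₀ 1)| ≤ δ / 8 * (1 / 4) := by
    rw [abs_mul]
    refine mul_le_mul (abs_le.2 ⟨by linarith, B.2⟩) (abs_le.2 ⟨by linarith, by linarith⟩)
      (abs_nonneg _) (by linarith)
  have m4 := abs_le.1 m3
  rw [e]
  exact ⟨by linarith, by linarith⟩

theorem eq_of_mem_stripTuples {s : ℕ} (hs : 3 ≤ s) {δ : ℝ} (hδ : 0 < δ) {a b a' b' : ℕ}
    {ξ : Fin s → Fin 2 → ℝ} (hξ : ξ ∈ stripTuples s δ (δ * a) (δ * b))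
    (hξ' : ξ ∈ stripTuples s δ (δ * a') (δ * b')) : a = a' ∧ b = b' := by
  obtain ⟨⟨a1, a2⟩, a3, a4⟩ := hξ ⟨0, by omega⟩ (mem_univ _)
  obtain ⟨⟨b1, b2⟩, b3, b4⟩ := hξ ⟨1, by omega⟩ (mem_univ _)
  obtain ⟨-, a3', a4'⟩ := hξ' ⟨0, by omega⟩ (mem_univ _)
  obtain ⟨-, b3', b4'⟩ := hξ' ⟨1, by omega⟩ (mem_univ _)
  generalize ξ ⟨0, by omega⟩ = p at *
  generalize ξ ⟨1, by omega⟩ = q at *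
  norm_num at a1 a2 a3 a4 b1 b2 b3 b4 a3' a4' b3' b4'
  set x : ℝ := (a : ℝ) - a' with hx
  set y : ℝ := (b : ℝ) - b' with hy
  have scale : ∀ t : ℝ, |δ * t| ≤ δ * (1 / 8) → |t| ≤ 1 / 8 := by
    intro t ht
    rw [abs_mul, abs_of_pos hδ] at ht
    exact le_of_mul_le_mul_left ht hδ
  have hp : |x + y * p 1| ≤ 1 / 8 := by
    apply scale
    rw [show δ * (x + y * p 1) = (δ * a + δ * b * p 1) - (δ * a' + δ * b' * p 1) by
      rw [hx, hy]; ring]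
    exact abs_le.2 ⟨by linarith, by linarith⟩
  have hq : |x + y * q 1| ≤ 1 / 8 := by
    apply scale
    rw [show δ * (x + y * q 1) = (δ * a + δ * b * q 1) - (δ * a' + δ * b' * q 1) by
      rw [hx, hy]; ring]
    exact abs_le.2 ⟨by linarith, by linarith⟩
  have hp' := abs_le.1 hp
  have hq' := abs_le.1 hq
  have hyq : |y * (q 1 - p 1)| ≤ 1 / 4 := abs_le.2 ⟨by linarith, by linarith⟩
  have hy1 : |y| < 1 := by
    rw [abs_mul, abs_of_pos (by linarith : 0 < q 1 - p 1)] at hyq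
    nlinarith [abs_nonneg y]
  have hb : b = b' := by
    have : |(b : ℤ) - b'| < 1 := by
      have h : |((b : ℝ) - b')| < 1 := hy1
      exact_mod_cast h
    have := Int.abs_lt_one_iff.1 this
    omega
  have hy0 : y = 0 := by rw [hy, hb, sub_self]
  refine ⟨?_, hb⟩
  have : |(a : ℤ) - a'| < 1 := by
    have h : |((a : ℝ) - a')| < 1 := by
      rw [hy0, zero_mul, add_zero] at hp
      linarith
    exact_mod_cast h
  have := Int.abs_lt_one_iff.1 this
  omega

/-- At the scales `8 ^ (-(j + 1))` the sets of tuples are pairwise disjoint. -/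
theorem disjoint_stripTuples {s : ℕ} (hs : 3 ≤ s) {m m' : Σ _ : ℕ, ℕ × ℕ} (hne : m ≠ m') :
    Disjoint
      (stripTuples s ((1 / 8) ^ (m.1 + 1)) ((1 / 8) ^ (m.1 + 1) * m.2.1)
        ((1 / 8) ^ (m.1 + 1) * m.2.2))
      (stripTuples s ((1 / 8) ^ (m'.1 + 1)) ((1 / 8) ^ (m'.1 + 1) * m'.2.1)
        ((1 / 8) ^ (m'.1 + 1) * m'.2.2)) := by
  have key : ∀ {j j' : ℕ} {α γ α' γ' : ℝ} {ξ : Fin s → Fin 2 → ℝ}, j < j' →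
      ξ ∈ stripTuples s ((1 / 8) ^ (j + 1)) α γ → ξ ∉ stripTuples s ((1 / 8) ^ (j' + 1)) α' γ' := by
    intro j j' α γ α' γ' ξ hjj h h'
    have h1 := (det_mem_of_mem_stripTuples hs (by positivity) h rfl rfl rfl).1
    have h2 := (det_mem_of_mem_stripTuples hs (by positivity) h' rfl rfl rfl).2
    have h3 : ((1 : ℝ) / 8) ^ (j' + 1) ≤ (1 / 8) ^ (j + 1 + 1) :=
      pow_le_pow_of_le_one (by norm_num) (by norm_num) (by omega)
    have h4 : (0 : ℝ) < (1 / 8) ^ (j + 1) := by positivity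
    rw [pow_succ _ (j + 1)] at h3
    linarith
  refine Set.disjoint_left.2 fun ξ h h' => ?_
  obtain ⟨j, a, b⟩ := m
  obtain ⟨j', a', b'⟩ := m'
  rcases lt_trichotomy j j' with hj | rfl | hj
  · exact key hj h h'
  · obtain ⟨rfl, rfl⟩ := eq_of_mem_stripTuples hs (by positivity) h h'
    exact hne rfl
  · exact key hj h' h

theorem Eext_one_pow (k s : ℕ) (x : Idx k → ℝ) :
    Eext k (fun _ => 1) x ^ s =
      ∫ ξ, Complex.exp (2 * π * Complex.I * (∑ β, x β * momentSum k s ξ β : ℝ))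
        ∂Measure.pi (fun _ : Fin s => (volume : Measure (Fin 2 → ℝ)).restrict (Icc 0 1)) := by
  have h := integral_fintype_prod_eq_pow (ι := Fin s)
    (fun ξ : Fin 2 → ℝ => Complex.exp (2 * π * Complex.I * (Pphase k x ξ)))
    (μ := (volume : Measure (Fin 2 → ℝ)).restrict (Icc 0 1))
  rw [Fintype.card_fin] at h
  simp only [Eext, one_mul]
  rw [← h]
  congr 1
  ext ξ
  rw [← Complex.exp_sum, ← Finset.mul_sum, ← Complex.ofReal_sum]
  congr 3
  simp only [Pphase, momentSum, momentVec, Finset.sum_apply, Finset.mul_sum]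
  rw [Finset.sum_comm]
  exact Finset.sum_congr rfl fun β _ => Finset.sum_congr rfl fun i _ => mul_assoc _ _ _

theorem norm_Eext_one_le_one (k : ℕ) (x : Idx k → ℝ) : ‖Eext k (fun _ => 1) x‖ ≤ 1 := by
  rw [Eext]
  refine (norm_setIntegral_le_of_norm_le_const (C := 1) ?_ ?_).trans ?_
  · rw [Real.volume_Icc_pi]; simp
  · intro ξ _
    rw [one_mul, show (2 * π * Complex.I * (Pphase k x ξ) : ℂ) =
      ((2 * π * Pphase k x ξ : ℝ) : ℂ) * Complex.I by push_cast; ring,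
      Complex.norm_exp_ofReal_mul_I]
  · rw [Measure.real, Real.volume_Icc_pi]; simp

/-- The even moment of `E_k 1` at the critical exponent diverges. -/
theorem lintegral_Eext_one_pow_eq_top (k : ℕ) {s : ℕ} (hs : 3 ≤ s)
    (hks : 2 * s = ∑ β : Idx k, (β.1.1 : ℕ) + 2) :
    ∫⁻ x : Idx k → ℝ, ENNReal.ofReal (‖Eext k (fun _ => 1) x‖ ^ (2 * s)) = ⊤ := by
  set D := ∑ β : Idx k, (β.1.1 : ℕ) with hD
  set N := Fintype.card (Idx k) with hN
  set δ : ℕ → ℝ := fun j => (1 / 8) ^ (j + 1) with hδ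
  have hδ0 : ∀ j, 0 < δ j := fun j => by positivity
  have hs0 : (0 : ℝ) < s := by exact_mod_cast (by omega : 0 < s)
  choose B hBc hBv hBm using fun m : Σ _ : ℕ, ℕ × ℕ =>
    exists_isCompact_momentSum_mem k s (hδ0 m.1) (δ m.1 * m.2.1) (δ m.1 * m.2.2)
  set b : (Σ _ : ℕ, ℕ × ℕ) → ℝ≥0∞ := fun m =>
    ENNReal.ofReal (2 * ((s : ℝ) ^ N * (2 * δ m.1) ^ D)) with hb
  have hBb : ∀ m, volume (B m) < b m := by
    intro m
    have h0 := hδ0 m.1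
    have : 0 < (s : ℝ) ^ N * (2 * δ m.1) ^ D := by positivity
    rw [hBv, hb]
    exact (ENNReal.ofReal_lt_ofReal_iff (by positivity)).2 (by linarith)
  set T : ℕ → Finset (Σ _ : ℕ, ℕ × ℕ) := fun J =>
    (Finset.range J).sigma fun j => Finset.range (2 * 8 ^ j) ×ˢ Finset.range (2 * 8 ^ j) with hT
  set c : ℝ := (1 / 32) ^ (2 * s) / (2 * ((s : ℝ) ^ N * 2 ^ D)) with hc
  have hc0 : 0 < c := by positivity
  have : IsFiniteMeasure ((volume : Measure (Fin 2 → ℝ)).restrict (Icc 0 1)) :=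
    ⟨by rw [Measure.restrict_apply_univ, Real.volume_Icc_pi]; simp⟩
  have hmain := fun J => sum_sq_measure_div_le_lintegral_sq
    (Measure.pi (fun _ : Fin s => (volume : Measure (Fin 2 → ℝ)).restrict (Icc 0 1)))
    (measurable_momentSum k s) (T J)
    (S := fun m => stripTuples s (δ m.1) (δ m.1 * m.2.1) (δ m.1 * m.2.2))
    (fun m => measurableSet_stripTuples _ _ _ _)
    (fun m _ m' _ hne => disjoint_stripTuples hs hne) hBc hBm hBb
  have hterm : ∀ J, ∀ m ∈ T J,
      Measure.pi (fun _ : Fin s => (volume : Measure (Fin 2 → ℝ)).restrict (Icc 0 1))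
        (stripTuples s (δ m.1) (δ m.1 * m.2.1) (δ m.1 * m.2.2)) ^ 2 / b m
        = ENNReal.ofReal (c * δ m.1 ^ 2) := by
    rintro J ⟨j, a, a'⟩ hm
    simp only [hT, Finset.mem_sigma, Finset.mem_product, Finset.mem_range] at hm
    have h0 := hδ0 j
    have hj8 : δ j * (2 * 8 ^ j) = 1 / 4 := by
      simp only [hδ, pow_succ]
      have : ((1 : ℝ) / 8) ^ j * 8 ^ j = 1 := by rw [← mul_pow]; norm_num
      linear_combination (1 / 4) * this
    have hlt : ∀ n : ℕ, n < 2 * 8 ^ j → δ j * n ≤ 1 / 4 := by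
      intro n hn
      rw [← hj8]
      refine mul_le_mul_of_nonneg_left ?_ h0.le
      exact_mod_cast hn.le
    rw [measure_stripTuples s h0 (pow_le_of_le_one (by norm_num) (by norm_num) (by omega))
      (by positivity) (by positivity) (by linarith [hlt a hm.2.1, hlt a' hm.2.2]), hb,
      ← ENNReal.ofReal_pow (by positivity), ← ENNReal.ofReal_pow (by positivity),
      ← ENNReal.ofReal_div_of_pos (by positivity)]
    congr 1
    rw [← pow_mul, mul_comm s 2, div_eq_mul_one_div (δ j) 32, mul_pow, hc, hks, pow_add (δ j)]
    simp only [mul_pow]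
    field_simp
  have hsum : ∀ J, ∑ m ∈ T J,
      Measure.pi (fun _ : Fin s => (volume : Measure (Fin 2 → ℝ)).restrict (Icc 0 1))
        (stripTuples s (δ m.1) (δ m.1 * m.2.1) (δ m.1 * m.2.2)) ^ 2 / b m
        = J * ENNReal.ofReal (c / 16) := by
    intro J
    rw [Finset.sum_congr rfl (hterm J), hT, Finset.sum_sigma]
    simp only [Finset.sum_const, Finset.card_product, Finset.card_range, nsmul_eq_mul]
    rw [Finset.sum_congr rfl (g := fun _ => ENNReal.ofReal (c / 16)), Finset.sum_const,
      Finset.card_range, nsmul_eq_mul]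
    intro j _
    rw [← ENNReal.ofReal_natCast, ← ENNReal.ofReal_mul (by positivity)]
    congr 1
    have : ((1 : ℝ) / 8) ^ j * 8 ^ j = 1 := by rw [← mul_pow]; norm_num
    push_cast
    simp only [hδ, pow_succ]
    linear_combination (c / 16) * (((1 : ℝ) / 8) ^ j * 8 ^ j + 1) * this
  have hE : ∀ x : Idx k → ℝ, ‖Eext k (fun _ => 1) x‖ ^ (2 * s) =
      ‖∫ ξ, Complex.exp (2 * π * Complex.I * (∑ β, x β * momentSum k s ξ β : ℝ))
        ∂Measure.pi (fun _ : Fin s => (volume : Measure (Fin 2 → ℝ)).restrict (Icc 0 1))‖ ^ 2 := by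
    intro x
    rw [← Eext_one_pow, norm_pow, ← pow_mul, mul_comm]
  simp only [hsum, ← hE] at hmain
  set A := ENNReal.ofReal (Real.exp (-π) ^ N) * ENNReal.ofReal (c / 16) with hA
  have hA0 : A ≠ 0 := by
    refine mul_ne_zero ?_ ?_ <;>
    · simp only [ne_eq, ENNReal.ofReal_eq_zero, not_le]; positivity
  by_contra htop
  obtain ⟨J, hJ⟩ := ENNReal.exists_nat_mul_gt hA0 htop
  refine (hJ.trans_le ((le_of_eq ?_).trans (hmain J))).false
  rw [hA]; ring

/-- **Corollary 1.4**, sharpness: if `q_k = k(k+1)(k+2)/6 + 2` is an even integer, then for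
every `0 < p ≤ q_k` the extension estimate fails at exponent `p`: the constant function
`f ≡ 1` has `∫_{ℝ^N} |E_k 1(x)|^p dx = ∞`, and there is no finite constant `C` with
`‖E_k f‖_{L^p(ℝ^N)} ≤ C ‖f‖_{L^∞([0,1]²)}` for all `f ∈ L^∞([0,1]²)`. -/
theorem extension_estimate_sharp (k : ℕ) (hk : 2 ≤ k)
    (q : ℕ) (hq : (q : ℝ) = (k : ℝ) * (k + 1) * (k + 2) / 6 + 2) (hqEven : Even q) :
    ∀ p : ℝ, 0 < p → p ≤ (q : ℝ) →
      (∫⁻ x : Idx k → ℝ, ENNReal.ofReal (‖Eext k (fun _ => 1) x‖ ^ p)) = ⊤ ∧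
      ¬ ∃ C : ℝ≥0∞, C < ⊤ ∧
          ∀ f : (Fin 2 → ℝ) → ℂ, Measurable f →
            eLpNorm (Eext k f) (ENNReal.ofReal p) volume ≤
              C * eLpNorm f ⊤ (volume.restrict (Icc (0 : Fin 2 → ℝ) 1)) := by
  intro p hp0 hpq
  obtain ⟨s, rfl⟩ := hqEven
  rw [← two_mul] at hq hpq
  have hsum := six_mul_sum_fst_idx k
  have hq' : 6 * (2 * s) = k * (k + 1) * (k + 2) + 12 := by
    have : (6 * (2 * s : ℕ) : ℝ) = k * (k + 1) * (k + 2) + 12 := by rw [hq]; ring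
    exact_mod_cast this
  have hk24 : 24 ≤ k * (k + 1) * (k + 2) :=
    Nat.mul_le_mul (Nat.mul_le_mul hk (by omega : 3 ≤ k + 1)) (by omega : 4 ≤ k + 2)
  have htop := lintegral_Eext_one_pow_eq_top k (s := s) (by omega) (by omega)
  have hfirst : (∫⁻ x : Idx k → ℝ, ENNReal.ofReal (‖Eext k (fun _ => 1) x‖ ^ p)) = ⊤ := by
    refine top_le_iff.1 (htop.symm.le.trans (lintegral_mono fun x => ?_))
    refine ENNReal.ofReal_le_ofReal ?_
    rcases (norm_nonneg (Eext k (fun _ => 1) x)).eq_or_lt with h | h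
    · rw [← h, Real.zero_rpow hp0.ne', zero_pow (by omega)]
    · rw [← Real.rpow_natCast]
      exact Real.rpow_le_rpow_of_exponent_ge h (norm_Eext_one_le_one k x) hpq
  refine ⟨hfirst, ?_⟩
  rintro ⟨C, hC, hCf⟩
  have h1 := hCf (fun _ => 1) measurable_const
  have h2 : eLpNorm (Eext k fun _ => 1) (ENNReal.ofReal p) volume = ⊤ := by
    rw [eLpNorm_eq_lintegral_rpow_enorm_toReal (by simpa using hp0) ENNReal.ofReal_ne_top,
      ENNReal.toReal_ofReal hp0.le]
    have : ∀ x, ‖Eext k (fun _ => 1) x‖ₑ ^ p = ENNReal.ofReal (‖Eext k (fun _ => 1) x‖ ^ p) :=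
      fun x => by
        rw [← ofReal_norm, ENNReal.ofReal_rpow_of_nonneg (norm_nonneg _) hp0.le]
    simp only [this, hfirst]
    exact ENNReal.top_rpow_of_pos (by positivity)
  have h3 : eLpNorm (fun _ : Fin 2 → ℝ => (1 : ℂ)) ⊤
      (volume.restrict (Icc (0 : Fin 2 → ℝ) 1)) ≤ 1 := by
    rw [eLpNorm_exponent_top]
    refine eLpNormEssSup_le_of_ae_enorm_bound (Filter.Eventually.of_forall fun _ => ?_)
    simp
  rw [h2, top_le_iff] at h1
  exact (ENNReal.mul_lt_top hC (h3.trans_lt ENNReal.one_lt_top)).ne h1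
end
end
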